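/- There is a constant A > 0 such that for all integers q, h with 1 ≤ q ≤ h, |Σ_{0 < j ≤ h/q} (h − jq)·𝔖(jq) − h²/(2φ(q)) + (h/2)·log(h/q)| ≤ A·h·(log log 3q)³, where j runs over positive integers with jq ≤ h. -/

import Mathlib

open Finset ArithmeticFunction

/-- The Generalized Riemann Hypothesis for Dirichlet L-functions: every zero of a
Dirichlet L-function in the critical strip lies on the critical line. -/
def GRH : Prop :=
  ∀ (N : ℕ) [NeZero N] (χ : DirichletCharacter ℂ N) (s : ℂ),
    DirichletCharacter.LFunction χ s = 0 → 0 < s.re → s.re < 1 → s.re = 1 / 2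

/-- `ψ(x; q, a) = ∑_{n ≤ x, n ≡ a (mod q)} Λ(n)`. -/
noncomputable def psi (x : ℝ) (q a : ℕ) : ℝ :=
  ∑ n ∈ (Finset.Icc 1 ⌊x⌋₊).filter (fun n : ℕ => (n : ZMod q) = (a : ZMod q)),
    ArithmeticFunction.vonMangoldt n

/-- `I(x,h,q,a) = ∫_x^{2x} (ψ(y+h;q,a) − ψ(y;q,a) − h/φ(q))² dy`. -/
noncomputable def momentI (x h : ℝ) (q a : ℕ) : ℝ :=
  ∫ y in x..(2 * x), (psi (y + h) q a - psi y q a - h / (q.totient : ℝ)) ^ 2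

/-- `λ_R(n) = ∑_{r ≤ R} (μ²(r)/φ(r)) ∑_{d ∣ (r,n)} d·μ(d)`. -/
noncomputable def lamR (R : ℝ) (n : ℕ) : ℝ :=
  ∑ r ∈ Finset.Icc 1 ⌊R⌋₊,
    ((ArithmeticFunction.moebius r : ℝ) ^ 2 / (r.totient : ℝ)) *
      ∑ d ∈ (Nat.gcd r n).divisors, (d : ℝ) * (ArithmeticFunction.moebius d : ℝ)

/-- `c = γ + ∑_p (log p)/(p(p−1))`. -/
noncomputable def cGY : ℝ :=
  Real.eulerMascheroniConstant +
    ∑' p : Nat.Primes, Real.log (p : ℕ) / (((p : ℕ) : ℝ) * (((p : ℕ) : ℝ) - 1))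

/-- `v(k) = ∑_{p ∣ k} (log p)/p`. -/
noncomputable def vGY (k : ℕ) : ℝ := ∑ p ∈ k.primeFactors, Real.log p / (p : ℝ)

/-- `w(k) = ∏_{p ∣ k} (1 + 1/√p)`. -/
noncomputable def wGY (k : ℕ) : ℝ := ∏ p ∈ k.primeFactors, (1 + 1 / Real.sqrt p)

/-- `g(k) = ∏_{p ∣ k} (1 + p/(p−1))`. -/
noncomputable def gGY (k : ℕ) : ℝ := ∏ p ∈ k.primeFactors, (1 + (p : ℝ) / ((p : ℝ) - 1))

/-- The twin prime constant `C = ∏_{p > 2} (1 − 1/(p−1)²)`. -/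
noncomputable def twinC : ℝ :=
  ∏' p : Nat.Primes, (if 2 < (p : ℕ) then 1 - 1 / (((p : ℕ) : ℝ) - 1) ^ 2 else 1)

/-- The singular series `𝔖(k)`. -/
noncomputable def singSeries (k : ℕ) : ℝ :=
  if 2 ∣ k ∧ k ≠ 0 then
    2 * twinC * ∏ p ∈ k.primeFactors.filter (fun p => 2 < p), ((p : ℝ) - 1) / ((p : ℝ) - 2)
  else 0

/-- `f(n,x,h)`, the length of the interval `[x,2x] ∩ [n−h,n)`. -/
noncomputable def flen (n : ℕ) (x h : ℝ) : ℝ :=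
  if x ≤ n ∧ (n : ℝ) < x + h then (n : ℝ) - x
  else if x + h ≤ n ∧ (n : ℝ) ≤ 2 * x then h
  else if 2 * x < n ∧ (n : ℝ) ≤ 2 * x + h then 2 * x - n + h
  else 0


lemma swap_sum (F : ℕ → ℕ → ℝ) (N : ℕ) :
    ∑ n ∈ Ioc 0 N, ∑ x ∈ n.divisorsAntidiagonal, F x.1 x.2
      = ∑ d ∈ Ioc 0 N, ∑ m ∈ Ioc 0 (N / d), F d m := by
  rw [Finset.sum_sigma', Finset.sum_sigma']
  refine Finset.sum_bij' (fun a _ => ⟨a.2.1, a.2.2⟩) (fun b _ => ⟨b.1 * b.2, (b.1, b.2)⟩)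
    ?_ ?_ ?_ ?_ ?_
  · rintro ⟨n, d, m⟩ h
    simp only [mem_sigma, mem_Ioc, Nat.mem_divisorsAntidiagonal] at h ⊢
    obtain ⟨⟨h1, h2⟩, rfl, h4⟩ := h
    have hd : 0 < d := Nat.pos_of_ne_zero (by rintro rfl; simp at h4)
    have hm : 0 < m := Nat.pos_of_ne_zero (by rintro rfl; simp at h4)
    refine ⟨⟨hd, le_trans (Nat.le_mul_of_pos_right _ hm) h2⟩, hm, ?_⟩
    rw [Nat.le_div_iff_mul_le hd]; linarith [mul_comm d m]
  · rintro ⟨d, m⟩ h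
    simp only [mem_sigma, mem_Ioc, Nat.mem_divisorsAntidiagonal] at h ⊢
    obtain ⟨⟨h1, h2⟩, h3, h4⟩ := h
    rw [Nat.le_div_iff_mul_le h1] at h4
    refine ⟨⟨Nat.mul_pos h1 h3, by linarith [mul_comm d m]⟩, by simp, ?_⟩
    exact (Nat.mul_pos h1 h3).ne'
  · rintro ⟨n, d, m⟩ h
    simp only [mem_sigma, mem_Ioc, Nat.mem_divisorsAntidiagonal] at h ⊢
    obtain ⟨⟨h1, h2⟩, rfl, h4⟩ := h
    rfl
  · rintro ⟨d, m⟩ h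
    rfl
  · rintro ⟨n, d, m⟩ h
    rfl

noncomputable def mulsf (w : ℕ → ℝ) : ArithmeticFunction ℝ :=
  ⟨fun n => if Squarefree n then ∏ p ∈ n.primeFactors, w p else 0, by simp⟩

lemma mulsf_apply (w : ℕ → ℝ) (n : ℕ) :
    mulsf w n = if Squarefree n then ∏ p ∈ n.primeFactors, w p else 0 := rfl

lemma mulsf_mult (w : ℕ → ℝ) : (mulsf w).IsMultiplicative := by
  refine ⟨by simp [mulsf_apply], ?_⟩
  intro m n h
  simp only [mulsf_apply, Nat.squarefree_mul h]
  by_cases h1 : Squarefree m <;> by_cases h2 : Squarefree n <;> simp [h1, h2]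
  rw [h.primeFactors_mul, Finset.prod_union h.disjoint_primeFactors]

lemma mulsf_prime (w : ℕ → ℝ) {p : ℕ} (hp : p.Prime) : mulsf w p = w p := by
  simp [mulsf_apply, hp.prime.squarefree, hp.primeFactors]

lemma mulsf_prime_pow (w : ℕ → ℝ) {p : ℕ} (hp : p.Prime) (k : ℕ) : mulsf w (p ^ (k + 2)) = 0 := by
  have : ¬ Squarefree (p ^ (k + 2)) := by
    intro h
    have := h p ⟨p ^ k, by ring⟩
    exact hp.one_lt.ne' (by simpa using this)
  simp [mulsf_apply, this]

lemma mulsf_nonneg {w : ℕ → ℝ} (hw : ∀ p, p.Prime → 0 ≤ w p) (n : ℕ) : 0 ≤ mulsf w n := by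
  rw [mulsf_apply]
  split_ifs
  · exact Finset.prod_nonneg fun p hp => hw p (Nat.prime_of_mem_primeFactors hp)
  · exact le_rfl

lemma mulsf_mono {w w' : ℕ → ℝ} (hw : ∀ p, p.Prime → 0 ≤ w p) (hw' : ∀ p, p.Prime → w p ≤ w' p)
    (n : ℕ) : mulsf w n ≤ mulsf w' n := by
  rw [mulsf_apply, mulsf_apply]
  split_ifs
  · exact Finset.prod_le_prod (fun p hp => hw p (Nat.prime_of_mem_primeFactors hp))
      (fun p hp => hw' p (Nat.prime_of_mem_primeFactors hp))
  · exact le_rfl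

lemma sum_divisors_mulsf (w : ℕ → ℝ) {n : ℕ} (hn : n ≠ 0) :
    ∑ d ∈ n.divisors, mulsf w d = ∏ p ∈ n.primeFactors, (1 + w p) := by
  have h1 : (mulsf w * (ArithmeticFunction.zeta : ArithmeticFunction ℝ))
      = ArithmeticFunction.prodPrimeFactors (fun p => 1 + w p) := by
    rw [ArithmeticFunction.IsMultiplicative.eq_iff_eq_on_prime_powers _
      ((mulsf_mult w).mul ArithmeticFunction.isMultiplicative_zeta.natCast) _
      (ArithmeticFunction.IsMultiplicative.prodPrimeFactors _)]
    intro p k hp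
    rw [ArithmeticFunction.coe_mul_zeta_apply, Nat.sum_divisors_prime_pow hp,
      ArithmeticFunction.prodPrimeFactors_apply (pow_ne_zero _ hp.ne_zero)]
    rcases k with _ | k
    · simp [mulsf_apply]
    · rw [Nat.primeFactors_prime_pow (by simp) hp]
      rw [Finset.sum_range_succ', Finset.sum_range_succ']
      simp [add_assoc, mulsf_prime_pow w hp, mulsf_prime w hp, (mulsf_mult w).1]
      ring
  have h2 := congrArg (fun f => f n) h1
  simp only [ArithmeticFunction.coe_mul_zeta_apply,
    ArithmeticFunction.prodPrimeFactors_apply hn] at h2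
  exact h2

lemma mulsf_step (w : ℕ → ℝ) {p : ℕ} (hp : p.Prime) (n : ℕ) :
    mulsf w n = mulsf (Function.update w p 0) n
      + (if p ∣ n then w p * mulsf (Function.update w p 0) (n / p) else 0) := by
  have key : ∀ m, ¬ p ∣ m → mulsf w m = mulsf (Function.update w p 0) m := by
    intro m hm
    rw [mulsf_apply, mulsf_apply]
    congr 1
    refine Finset.prod_congr rfl fun r hr => ?_
    rw [Function.update_of_ne]
    rintro rfl
    exact hm (Nat.dvd_of_mem_primeFactors hr)
  have key0 : ∀ m, p ∣ m → mulsf (Function.update w p 0) m = 0 := by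
    intro m hm
    rw [mulsf_apply]
    split_ifs with h
    · exact Finset.prod_eq_zero (i := p) (Nat.mem_primeFactors.2 ⟨hp, hm, h.ne_zero⟩) (by simp)
    · rfl
  by_cases h : p ∣ n
  · obtain ⟨m, rfl⟩ := h
    rw [key0 _ (dvd_mul_right _ _), if_pos (dvd_mul_right _ _), Nat.mul_div_cancel_left _ hp.pos,
      zero_add]
    by_cases hm : p ∣ m
    · rw [key0 _ hm, mul_zero, mulsf_apply, if_neg]
      intro hsq
      obtain ⟨l, rfl⟩ := hm
      have := hsq p ⟨l, by ring⟩
      exact hp.one_lt.ne' (by simpa using this)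
    · rw [(mulsf_mult w).map_mul_of_coprime ((Nat.Prime.coprime_iff_not_dvd hp).2 hm),
        mulsf_prime w hp, key _ hm]
  · rw [if_neg h, key _ h, add_zero]

lemma sum_dvd (F : ℕ → ℝ) {p : ℕ} (hp : 0 < p) (N : ℕ) :
    ∑ n ∈ Ioc 0 N, (if p ∣ n then F (n / p) else 0) = ∑ m ∈ Ioc 0 (N / p), F m := by
  rw [← Finset.sum_filter]
  refine Finset.sum_bij' (fun n _ => n / p) (fun m _ => p * m) ?_ ?_ ?_ ?_ ?_
  · intro n hn
    simp only [mem_filter, mem_Ioc] at hn ⊢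
    obtain ⟨⟨h1, h2⟩, m, rfl⟩ := hn
    exact ⟨Nat.div_pos (Nat.le_of_dvd h1 (dvd_mul_right _ _)) hp, Nat.div_le_div_right h2⟩
  · intro m hm
    simp only [mem_filter, mem_Ioc] at hm ⊢
    have := hm.2
    rw [Nat.le_div_iff_mul_le hp] at this
    exact ⟨⟨Nat.mul_pos hp hm.1, by linarith [mul_comm p m]⟩, dvd_mul_right _ _⟩
  · intro n hn
    simp only [mem_filter, mem_Ioc] at hn
    exact Nat.mul_div_cancel' hn.2
  · intro m hm
    exact Nat.mul_div_cancel_left _ hp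
  · intro n hn
    rfl

lemma sum_mulsf_step (w : ℕ → ℝ) {p : ℕ} (hp : p.Prime) (N : ℕ) :
    ∑ n ∈ Ioc 0 N, mulsf w n = ∑ n ∈ Ioc 0 N, mulsf (Function.update w p 0) n
      + w p * ∑ n ∈ Ioc 0 (N / p), mulsf (Function.update w p 0) n := by
  rw [Finset.sum_congr rfl (fun n _ => mulsf_step w hp n), Finset.sum_add_distrib,
    sum_dvd (fun m => w p * mulsf (Function.update w p 0) m) hp.pos, Finset.mul_sum]

/-- summability of nonnegative multiplicative functions -/
lemma summable_mult {f : ℕ → ℝ} (hf0 : ∀ n, 0 ≤ f n) (hf1 : f 1 = 1) (hfz : f 0 = 0)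
    (hmul : ∀ {m n}, Nat.Coprime m n → f (m * n) = f m * f n) (b : ℕ → ℝ)
    (hb : Summable b) (hb0 : ∀ p, 0 ≤ b p)
    (hsum : ∀ {p : ℕ}, p.Prime → Summable (fun n : ℕ ↦ f (p ^ n)))
    (hle : ∀ {p : ℕ}, p.Prime → ∑' n : ℕ, f (p ^ n) ≤ 1 + b p) : Summable f := by
  refine summable_of_sum_range_le (c := Real.exp (∑' p, b p)) hf0 ?_
  intro N
  have hs := EulerProduct.summable_and_hasSum_smoothNumbers_prod_primesBelow_tsum hf1 hmul
    (fun {p} hp => by simpa [Real.norm_eq_abs, abs_of_nonneg (hf0 _)] using hsum hp) N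
  have h1 : ∏ p ∈ N.primesBelow, ∑' n : ℕ, f (p ^ n) ≤ Real.exp (∑' p, b p) := by
    calc ∏ p ∈ N.primesBelow, ∑' n : ℕ, f (p ^ n)
        ≤ ∏ p ∈ N.primesBelow, Real.exp (b p) := by
          refine Finset.prod_le_prod (fun p _ => tsum_nonneg fun n => hf0 _) (fun p hp => ?_)
          refine (hle (Nat.prime_of_mem_primesBelow hp)).trans ?_
          linarith [Real.add_one_le_exp (b p)]
      _ = Real.exp (∑ p ∈ N.primesBelow, b p) := (Real.exp_sum _ _).symm
      _ ≤ _ := Real.exp_le_exp.2 (hb.sum_le_tsum _ (fun p _ => hb0 p))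
  refine le_trans ?_ h1
  rw [← hs.2.tsum_eq]
  have h2 : ∑ i ∈ range N, f i = ∑ i ∈ (range N).filter (fun i => i ∈ N.smoothNumbers), f i := by
    rw [Finset.sum_filter]
    refine Finset.sum_congr rfl fun i hi => ?_
    split_ifs with h
    · rfl
    · have : i = 0 := by
        by_contra h0
        exact h (Nat.mem_smoothNumbers_of_lt (Nat.pos_of_ne_zero h0) (Finset.mem_range.1 hi))
      rw [this, hfz]
  rw [h2, ← Finset.sum_subtype_of_mem (p := fun i => i ∈ N.smoothNumbers) f (by simp)]
  exact hs.2.summable.sum_le_tsum _ (fun p _ => hf0 p)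

lemma sum_logp_div_le {n : ℕ} (hn : 1 ≤ n) :
    ∑ p ∈ (Ioc 0 n).filter Nat.Prime, Real.log p / p ≤ 2 * Real.log n := by
  have h1 : ∑ d ∈ Ioc 0 n, (ArithmeticFunction.vonMangoldt d) * ((n / d : ℕ) : ℝ)
      = ∑ m ∈ Ioc 0 n, Real.log m := by
    rw [← ArithmeticFunction.sum_Ioc_mul_zeta_eq_sum, ArithmeticFunction.vonMangoldt_mul_zeta]
    rfl
  have h2 : ∑ m ∈ Ioc 0 n, Real.log m ≤ n * Real.log n := by
    calc ∑ m ∈ Ioc 0 n, Real.log m ≤ ∑ m ∈ Ioc 0 n, Real.log n := by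
          refine Finset.sum_le_sum fun m hm => ?_
          rw [mem_Ioc] at hm
          exact Real.log_le_log (by exact_mod_cast hm.1) (by exact_mod_cast hm.2)
      _ = _ := by simp
  have h3 : ∑ p ∈ (Ioc 0 n).filter Nat.Prime, Real.log p / p * (n / 2)
      ≤ ∑ d ∈ Ioc 0 n, (ArithmeticFunction.vonMangoldt d) * ((n / d : ℕ) : ℝ) := by
    refine le_trans ?_ (Finset.sum_le_sum_of_subset_of_nonneg (Finset.filter_subset Nat.Prime _)
      (fun i _ _ => mul_nonneg ArithmeticFunction.vonMangoldt_nonneg (by positivity)))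
    refine Finset.sum_le_sum fun p hp => ?_
    rw [mem_filter, mem_Ioc] at hp
    obtain ⟨⟨h1, h2⟩, hp⟩ := hp
    rw [ArithmeticFunction.vonMangoldt_apply_prime hp]
    have hlog : 0 ≤ Real.log p := Real.log_natCast_nonneg p
    have hp0 : (0 : ℝ) < p := by exact_mod_cast h1
    have h4 : (n : ℝ) / (2 * p) ≤ ((n / p : ℕ) : ℝ) := by
      have ha : 1 ≤ n / p := Nat.div_pos h2 h1
      have hb : n < p * (n / p + 1) := Nat.lt_mul_div_succ n h1
      have hb' : (n : ℝ) < p * ((n / p : ℕ) + 1) := by exact_mod_cast hb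
      have ha' : (1 : ℝ) ≤ ((n / p : ℕ) : ℝ) := by exact_mod_cast ha
      rw [div_le_iff₀ (by positivity)]
      nlinarith
    calc Real.log p / p * (n / 2) = Real.log p * (n / (2 * p)) := by field_simp
      _ ≤ _ := by gcongr
  rw [← Finset.sum_mul] at h3
  have hn0 : (0 : ℝ) < n := by exact_mod_cast hn
  have h5 : (∑ p ∈ (Ioc 0 n).filter Nat.Prime, Real.log p / p) * (n / 2) ≤ n * Real.log n := by
    linarith
  by_contra hcon
  push Not at hcon
  nlinarith

lemma sum_inv_prime_aux (n : ℕ) (hn : 2 ≤ n) :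
    ∑ p ∈ (Ioc 0 n).filter Nat.Prime, (1 : ℝ) / p
      - (∑ p ∈ (Ioc 0 n).filter Nat.Prime, Real.log p / p) / Real.log n
      ≤ 2 * (Real.log (Real.log n) - Real.log (Real.log 2)) := by
  induction n, hn using Nat.le_induction with
  | base =>
    have : (Ioc 0 2).filter Nat.Prime = {2} := by decide
    rw [this]
    have hl : Real.log 2 ≠ 0 := (Real.log_pos (by norm_num)).ne'
    simp
    field_simp
    simp
  | succ n hn ih =>
    have hins : Ioc 0 (n + 1) = insert (n + 1) (Ioc 0 n) := by
      ext; simp; omega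
    have hl : 0 < Real.log n := Real.log_pos (by exact_mod_cast hn)
    have hl' : 0 < Real.log ((n + 1 : ℕ) : ℝ) := Real.log_pos (by norm_cast; omega)
    have hA := sum_logp_div_le (n := n) (by omega)
    have hmono : Real.log n ≤ Real.log ((n + 1 : ℕ) : ℝ) :=
      Real.log_le_log (by norm_cast; omega) (by norm_cast; omega)
    have hrec : ∑ p ∈ (Ioc 0 (n + 1)).filter Nat.Prime, (1 : ℝ) / p
      - (∑ p ∈ (Ioc 0 (n + 1)).filter Nat.Prime, Real.log p / p) / Real.log ((n + 1 : ℕ) : ℝ)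
      = ∑ p ∈ (Ioc 0 n).filter Nat.Prime, (1 : ℝ) / p
      - (∑ p ∈ (Ioc 0 n).filter Nat.Prime, Real.log p / p) / Real.log ((n + 1 : ℕ) : ℝ) := by
      rw [hins, Finset.filter_insert]
      split_ifs with h
      · rw [Finset.sum_insert (by simp), Finset.sum_insert (by simp)]
        have : ((n + 1 : ℕ) : ℝ) ≠ 0 := by positivity
        field_simp
        ring
      · rfl
    rw [hrec]
    set A := ∑ p ∈ (Ioc 0 n).filter Nat.Prime, Real.log p / p
    have h1 : A * (1 / Real.log n - 1 / Real.log ((n + 1 : ℕ) : ℝ))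
        ≤ 2 * (1 - Real.log n / Real.log ((n + 1 : ℕ) : ℝ)) := by
      have : 0 ≤ 1 / Real.log n - 1 / Real.log ((n + 1 : ℕ) : ℝ) := by
        rw [sub_nonneg]; exact one_div_le_one_div_of_le hl hmono
      calc _ ≤ 2 * Real.log n * (1 / Real.log n - 1 / Real.log ((n + 1 : ℕ) : ℝ)) := by gcongr
        _ = _ := by field_simp
    have h2 : 1 - Real.log n / Real.log ((n + 1 : ℕ) : ℝ)
        ≤ Real.log (Real.log ((n + 1 : ℕ) : ℝ)) - Real.log (Real.log n) := by
      have := Real.one_sub_inv_le_log_of_pos (x := Real.log ((n + 1 : ℕ) : ℝ) / Real.log n)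
        (by positivity)
      rw [Real.log_div hl'.ne' hl.ne', inv_div] at this
      exact this
    have h3 : A / Real.log ((n + 1 : ℕ) : ℝ)
        = A / Real.log n - A * (1 / Real.log n - 1 / Real.log ((n + 1 : ℕ) : ℝ)) := by ring
    linarith

lemma sum_inv_prime_le : ∃ K : ℝ, ∀ n : ℕ, 2 ≤ n →
    ∑ p ∈ (Ioc 0 n).filter Nat.Prime, (1 : ℝ) / p ≤ 2 * Real.log (Real.log n) + K := by
  refine ⟨2 - 2 * Real.log (Real.log 2), fun n hn => ?_⟩
  have h := sum_inv_prime_aux n hn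
  have hA := sum_logp_div_le (n := n) (by omega)
  have hl : 0 < Real.log n := Real.log_pos (by exact_mod_cast hn)
  have : (∑ p ∈ (Ioc 0 n).filter Nat.Prime, Real.log p / p) / Real.log n ≤ 2 := by
    rw [div_le_iff₀ hl]; exact hA
  linarith

/-- weight `1/(p-2)`, with the value `0` at `p = 2` -/
noncomputable def w0 (p : ℕ) : ℝ := 1 / ((p : ℝ) - 2)

lemma w0_two : w0 2 = 0 := by simp [w0]

lemma w0_nonneg {p : ℕ} (hp : 2 ≤ p) : 0 ≤ w0 p := by
  have : (2 : ℝ) ≤ p := by exact_mod_cast hp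
  unfold w0
  apply div_nonneg <;> linarith

lemma w0_le {p : ℕ} (hp : 2 ≤ p) : w0 p ≤ 3 / p := by
  rcases Nat.lt_or_ge 2 p with h | h
  · have : (3 : ℝ) ≤ p := by exact_mod_cast h
    unfold w0
    rw [div_le_div_iff₀ (by linarith) (by linarith)]
    linarith
  · have : p = 2 := by omega
    subst this
    rw [w0_two]; norm_num

lemma w0_le' {p : ℕ} (hp : 2 ≤ p) : w0 p ≤ 1 / p + 6 * ((p : ℝ) ^ 2)⁻¹ := by
  rcases Nat.lt_or_ge 2 p with h | h
  · have h3 : (3 : ℝ) ≤ p := by exact_mod_cast h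
    have h4 : (0 : ℝ) < p - 2 := by linarith
    have h5 : (0 : ℝ) < p := by linarith
    have : 1 / (p : ℝ) + 6 * ((p : ℝ) ^ 2)⁻¹ = (p + 6) / p ^ 2 := by field_simp
    unfold w0
    rw [this, div_le_div_iff₀ h4 (by positivity)]
    nlinarith
  · have : p = 2 := by omega
    subst this
    rw [w0_two]; positivity

noncomputable def PP (s : Finset ℕ) : ℝ := ∏ p ∈ s, (1 + w0 p)
noncomputable def VV (s : Finset ℕ) : ℝ := ∑ p ∈ s, w0 p * Real.log p

lemma sum_log_primeFactors {q : ℕ} (hq : 1 ≤ q) : ∑ p ∈ q.primeFactors, Real.log p ≤ Real.log q := by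
  rw [← Real.log_prod (fun p hp => by exact_mod_cast (Nat.prime_of_mem_primeFactors hp).ne_zero)]
  apply Real.log_le_log
  · exact Finset.prod_pos fun p hp => by exact_mod_cast (Nat.prime_of_mem_primeFactors hp).pos
  · rw [← Nat.cast_prod]
    exact_mod_cast Nat.le_of_dvd hq (Nat.prod_primeFactors_dvd q)

lemma loglog_pos {q : ℕ} (hq : 1 ≤ q) : 1 < Real.log (3 * q) ∧
    Real.log (Real.log 3) ≤ Real.log (Real.log (3 * q)) ∧ 0 < Real.log (Real.log 3) := by
  have h3 : 1 < Real.log 3 := by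
    rw [Real.lt_log_iff_exp_lt (by norm_num)]
    exact Real.exp_one_lt_three
  have hq' : (1 : ℝ) ≤ q := by exact_mod_cast hq
  have h4 : Real.log 3 ≤ Real.log (3 * q) := Real.log_le_log (by norm_num) (by linarith)
  exact ⟨by linarith, Real.log_le_log (by linarith) h4, Real.log_pos h3⟩

lemma split_primeFactors {q : ℕ} (hq : 1 ≤ q) (F : ℕ → ℝ) (hF : ∀ p, p.Prime → 0 ≤ F p)
    (K : ℝ) (hK0 : 0 ≤ K) (hK : ∀ p, p.Prime → F p ≤ K * (Real.log p / p)) :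
    ∑ p ∈ q.primeFactors, F p
      ≤ ∑ p ∈ (Ioc 0 ⌊Real.log (3 * q)⌋₊).filter Nat.Prime, F p + K := by
  set y := Real.log (3 * q) with hy
  have hy1 : 1 < y := (loglog_pos hq).1
  rw [← Finset.sum_filter_add_sum_filter_not q.primeFactors (fun p => p ≤ ⌊y⌋₊)]
  refine add_le_add ?_ ?_
  · refine Finset.sum_le_sum_of_subset_of_nonneg ?_ ?_
    · intro p hp
      simp only [mem_filter, mem_Ioc] at hp ⊢
      have := Nat.prime_of_mem_primeFactors hp.1
      exact ⟨⟨this.pos, hp.2⟩, this⟩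
    · intro p hp _
      exact hF p (mem_filter.1 hp).2
  · calc _ ≤ ∑ p ∈ q.primeFactors with ¬ p ≤ ⌊y⌋₊, K / y * Real.log p := by
          refine Finset.sum_le_sum fun p hp => ?_
          rw [mem_filter] at hp
          have hpp := Nat.prime_of_mem_primeFactors hp.1
          have hyp : y ≤ p := by
            have := Nat.lt_of_floor_lt (not_le.1 hp.2)
            exact this.le
          refine (hK p hpp).trans ?_
          have hl : 0 ≤ Real.log p := Real.log_natCast_nonneg p
          have hy0 : 0 < y := by linarith
          calc K * (Real.log p / p) ≤ K * (Real.log p / y) := by gcongr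
            _ = _ := by ring
      _ ≤ ∑ p ∈ q.primeFactors, K / y * Real.log p := by
          refine Finset.sum_le_sum_of_subset_of_nonneg (Finset.filter_subset _ _) ?_
          intro p _ _
          have hl : 0 ≤ Real.log p := Real.log_natCast_nonneg p
          positivity
      _ = K / y * ∑ p ∈ q.primeFactors, Real.log p := by rw [Finset.mul_sum]
      _ ≤ K / y * y := by
          have : Real.log q ≤ y := Real.log_le_log (by exact_mod_cast hq)
            (by have : (1 : ℝ) ≤ q := by exact_mod_cast hq
                linarith)
          gcongr
          exact (sum_log_primeFactors hq).trans this
      _ = K := by field_simp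

lemma VV_le : ∃ K : ℝ, 0 < K ∧ ∀ q : ℕ, 1 ≤ q →
    VV q.primeFactors ≤ K * Real.log (Real.log (3 * q)) := by
  have hL3 := (loglog_pos (le_refl 1)).2.2
  refine ⟨6 + 3 / Real.log (Real.log 3), by positivity, fun q hq => ?_⟩
  obtain ⟨hy1, hL, hL0⟩ := loglog_pos hq
  have hb : ∀ p : ℕ, p.Prime → w0 p * Real.log p ≤ 3 * (Real.log p / p) := by
    intro p hp
    have := w0_le hp.two_le
    have hl : 0 ≤ Real.log p := Real.log_natCast_nonneg p
    calc w0 p * Real.log p ≤ 3 / p * Real.log p := by gcongr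
      _ = _ := by ring
  have h := split_primeFactors hq (fun p => w0 p * Real.log p)
    (fun p hp => mul_nonneg (w0_nonneg hp.two_le) (Real.log_natCast_nonneg p)) 3 (by norm_num) hb
  have hfl : 1 ≤ ⌊Real.log (3 * q)⌋₊ := Nat.le_floor (by exact_mod_cast hy1.le)
  have h2 : ∑ p ∈ (Ioc 0 ⌊Real.log (3 * q)⌋₊).filter Nat.Prime, w0 p * Real.log p
      ≤ 6 * Real.log (Real.log (3 * q)) := by
    calc _ ≤ ∑ p ∈ (Ioc 0 ⌊Real.log (3 * q)⌋₊).filter Nat.Prime, 3 * (Real.log p / p) :=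
          Finset.sum_le_sum fun p hp => hb p (mem_filter.1 hp).2
      _ = 3 * ∑ p ∈ (Ioc 0 ⌊Real.log (3 * q)⌋₊).filter Nat.Prime, (Real.log p / p) := by
          rw [Finset.mul_sum]
      _ ≤ 3 * (2 * Real.log ⌊Real.log (3 * q)⌋₊) := by
          gcongr; exact sum_logp_div_le hfl
      _ ≤ 3 * (2 * Real.log (Real.log (3 * q))) := by
          gcongr
          exact Nat.floor_le (by linarith)
      _ = _ := by ring
  have h3 : (3 : ℝ) ≤ 3 / Real.log (Real.log 3) * Real.log (Real.log (3 * q)) := by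
    rw [div_mul_eq_mul_div, le_div_iff₀ hL3]; linarith
  unfold VV
  linarith

lemma PP_le : ∃ K : ℝ, 0 < K ∧ ∀ q : ℕ, 1 ≤ q →
    PP q.primeFactors ≤ K * Real.log (Real.log (3 * q)) ^ 2 := by
  obtain ⟨K0, hK0⟩ := sum_inv_prime_le
  have hL3 := (loglog_pos (le_refl 1)).2.2
  set l3 := Real.log (Real.log 3) with hl3
  have hlog2 : 0 < Real.log 2 := Real.log_pos (by norm_num)
  refine ⟨Real.exp (K0 + 12 + 3 / Real.log 2) + Real.exp (3 / Real.log 2) / l3 ^ 2, by positivity,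
    fun q hq => ?_⟩
  obtain ⟨hy1, hL, hL0⟩ := loglog_pos hq
  have hb : ∀ p : ℕ, p.Prime → w0 p ≤ (3 / Real.log 2) * (Real.log p / p) := by
    intro p hp
    have h1 := w0_le hp.two_le
    have hl : Real.log 2 ≤ Real.log p := Real.log_le_log (by norm_num) (by exact_mod_cast hp.two_le)
    have hp0 : (0 : ℝ) < p := by exact_mod_cast hp.pos
    calc w0 p ≤ 3 / p := h1
      _ = (3 / Real.log 2) * (Real.log 2 / p) := by field_simp
      _ ≤ _ := by gcongr
  have h := split_primeFactors hq w0 (fun p hp => w0_nonneg hp.two_le) (3 / Real.log 2)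
    (by positivity) hb
  have hPP : PP q.primeFactors ≤ Real.exp (∑ p ∈ q.primeFactors, w0 p) := by
    rw [Real.exp_sum]
    unfold PP
    refine Finset.prod_le_prod (fun p hp => ?_) (fun p hp => ?_)
    · have := w0_nonneg (Nat.prime_of_mem_primeFactors hp).two_le
      linarith
    · linarith [Real.add_one_le_exp (w0 p)]
  set n := ⌊Real.log (3 * q)⌋₊ with hn
  set L := Real.log (Real.log (3 * q)) with hLdef
  have hLpos : 0 < L := by linarith
  refine hPP.trans ?_
  rcases Nat.lt_or_ge n 2 with hn2 | hn2
  · have he : (Ioc 0 n).filter Nat.Prime = ∅ := by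
      ext p
      simp only [mem_filter, mem_Ioc, notMem_empty, iff_false]
      rintro ⟨⟨_, h2⟩, h3⟩
      have := h3.two_le
      omega
    rw [he, Finset.sum_empty, zero_add] at h
    have h1 : Real.exp (∑ p ∈ q.primeFactors, w0 p) ≤ Real.exp (3 / Real.log 2) :=
      Real.exp_le_exp.2 h
    have h2 : Real.exp (3 / Real.log 2) ≤ Real.exp (3 / Real.log 2) / l3 ^ 2 * L ^ 2 := by
      rw [div_mul_eq_mul_div, le_div_iff₀ (by positivity)]
      gcongr
    have h3 : 0 ≤ Real.exp (K0 + 12 + 3 / Real.log 2) * L ^ 2 := by positivity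
    linarith [add_mul (Real.exp (K0 + 12 + 3 / Real.log 2))
      (Real.exp (3 / Real.log 2) / l3 ^ 2) (L ^ 2)]
  · have h1 : ∑ p ∈ (Ioc 0 n).filter Nat.Prime, w0 p ≤ 2 * Real.log (Real.log n) + K0 + 12 := by
      calc _ ≤ ∑ p ∈ (Ioc 0 n).filter Nat.Prime, ((1 : ℝ) / p + 6 * ((p : ℝ) ^ 2)⁻¹) :=
            Finset.sum_le_sum fun p hp => w0_le' (mem_filter.1 hp).2.two_le
        _ = ∑ p ∈ (Ioc 0 n).filter Nat.Prime, (1 : ℝ) / p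
            + 6 * ∑ p ∈ (Ioc 0 n).filter Nat.Prime, ((p : ℝ) ^ 2)⁻¹ := by
            rw [Finset.sum_add_distrib, Finset.mul_sum]
        _ ≤ (2 * Real.log (Real.log n) + K0) + 6 * 2 := by
            gcongr
            · exact hK0 n hn2
            · calc _ ≤ ∑ p ∈ Ioo 0 (n + 1), ((p : ℝ) ^ 2)⁻¹ := by
                    refine Finset.sum_le_sum_of_subset_of_nonneg ?_ (fun _ _ _ => by positivity)
                    intro p hp
                    simp only [mem_filter, mem_Ioc, mem_Ioo] at hp ⊢
                    omega
                _ ≤ 2 / ((0 : ℕ) + 1) := sum_Ioo_inv_sq_le 0 (n + 1)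
                _ = 2 := by norm_num
        _ = _ := by ring
    have hn2' : (2 : ℝ) ≤ n := by exact_mod_cast hn2
    have hlogn : 0 < Real.log n := Real.log_pos (by linarith)
    have h2 : Real.log n ≤ L := by
      apply Real.log_le_log (by linarith)
      exact Nat.floor_le (by linarith)
    have h3 : Real.log (Real.log n) ≤ Real.log L := Real.log_le_log hlogn h2
    have h4 : Real.exp (∑ p ∈ q.primeFactors, w0 p)
        ≤ Real.exp (K0 + 12 + 3 / Real.log 2 + (Real.log L + Real.log L)) :=
      Real.exp_le_exp.2 (by linarith)
    rw [Real.exp_add _ (Real.log L + Real.log L), Real.exp_add (Real.log L), Real.exp_log hLpos]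
      at h4
    have h5 : 0 ≤ Real.exp (3 / Real.log 2) / l3 ^ 2 * L ^ 2 := by positivity
    linarith [add_mul (Real.exp (K0 + 12 + 3 / Real.log 2))
      (Real.exp (3 / Real.log 2) / l3 ^ 2) (L ^ 2), pow_two L]

noncomputable def aa : ArithmeticFunction ℝ := ⟨fun n => n * mulsf w0 n, by simp⟩

lemma aa_apply (n : ℕ) : aa n = n * mulsf w0 n := rfl

lemma aa_nonneg (n : ℕ) : 0 ≤ aa n :=
  mul_nonneg (by positivity) (mulsf_nonneg (fun _ hp => w0_nonneg hp.two_le) n)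

lemma aa_mult : aa.IsMultiplicative := by
  refine ⟨by simp [aa_apply, (mulsf_mult w0).1], ?_⟩
  intro m n h
  simp only [aa_apply, (mulsf_mult w0).map_mul_of_coprime h]
  push_cast
  ring

noncomputable def cc : ArithmeticFunction ℝ :=
  aa * ((ArithmeticFunction.moebius : ArithmeticFunction ℤ) : ArithmeticFunction ℝ)

lemma cc_mul_zeta : cc * ((ArithmeticFunction.zeta : ArithmeticFunction ℕ) : ArithmeticFunction ℝ)
    = aa := by
  rw [cc, mul_assoc, ArithmeticFunction.coe_moebius_mul_coe_zeta, mul_one]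

lemma cc_mult : cc.IsMultiplicative :=
  aa_mult.mul ArithmeticFunction.isMultiplicative_moebius.intCast

lemma cc_prime_pow {p : ℕ} (hp : p.Prime) (k : ℕ) :
    cc (p ^ (k + 1)) = aa (p ^ (k + 1)) - aa (p ^ k) := by
  rw [← cc_mul_zeta, ArithmeticFunction.coe_mul_zeta_apply, ArithmeticFunction.coe_mul_zeta_apply,
    Nat.sum_divisors_prime_pow hp, Nat.sum_divisors_prime_pow hp, Finset.sum_range_succ _ (k + 1)]
  ring

lemma aa_prime {p : ℕ} (hp : p.Prime) : aa p = p * w0 p := by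
  rw [aa_apply, mulsf_prime _ hp]

lemma aa_prime_pow {p : ℕ} (hp : p.Prime) (k : ℕ) : aa (p ^ (k + 2)) = 0 := by
  rw [aa_apply, mulsf_prime_pow _ hp, mul_zero]

lemma cc_p {p : ℕ} (hp : p.Prime) : cc p = p * w0 p - 1 := by
  have := cc_prime_pow hp 0
  simpa [aa_prime hp, aa_mult.1] using this

lemma cc_p2 {p : ℕ} (hp : p.Prime) : cc (p ^ 2) = - (p * w0 p) := by
  have := cc_prime_pow hp 1
  have h2 := aa_prime_pow hp 0
  simp only [zero_add] at h2
  simpa [aa_prime hp, h2] using this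

lemma cc_p3 {p : ℕ} (hp : p.Prime) (k : ℕ) : cc (p ^ (k + 3)) = 0 := by
  rw [cc_prime_pow hp (k + 2), show k + 2 + 1 = (k + 1) + 2 by ring, aa_prime_pow hp,
    aa_prime_pow hp, sub_zero]

lemma hasSum_three {f : ℕ → ℝ} (h : ∀ k, f (k + 3) = 0) : HasSum f (f 0 + f 1 + f 2) := by
  have := hasSum_sum_of_ne_finset_zero (f := f) (s := range 3)
    (L := SummationFilter.unconditional ℕ) (by
    intro b hb
    rw [mem_range, not_lt] at hb
    obtain ⟨k, rfl⟩ := Nat.exists_eq_add_of_le hb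
    rw [add_comm]; exact h k)
  simpa [Finset.sum_range_succ] using this

noncomputable def ff (n : ℕ) : ℝ := |cc n| * (n : ℝ) ^ (-(3 / 4) : ℝ)

lemma ff_nonneg (n : ℕ) : 0 ≤ ff n := by unfold ff; positivity

lemma ff_summable : Summable ff := by
  have h3 : ∀ {p : ℕ}, p.Prime → ∀ k, ff (p ^ (k + 3)) = 0 := by
    intro p hp k
    simp [ff, cc_p3 hp]
  have hone : ff 1 = 1 := by simp [ff, cc_mult.1]
  refine summable_mult (b := fun n => 9 * (n : ℝ) ^ (-(3 / 2) : ℝ)) ff_nonneg hone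
    (by simp [ff]) ?_ ?_ ?_ ?_ ?_
  · intro m n h
    unfold ff
    rw [cc_mult.map_mul_of_coprime h, abs_mul, Nat.cast_mul,
      Real.mul_rpow (by positivity) (by positivity)]
    ring
  · exact (Real.summable_nat_rpow.2 (by norm_num)).mul_left 9
  · intro p; positivity
  · intro p hp
    exact (hasSum_three (f := fun n => ff (p ^ n)) (h3 hp)).summable
  · intro p hp
    rw [(hasSum_three (f := fun n => ff (p ^ n)) (h3 hp)).tsum_eq]
    simp only [pow_zero, pow_one, hone]
    have hp2 : (2 : ℝ) ≤ p := by exact_mod_cast hp.two_le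
    have hp0 : (0 : ℝ) < p := by linarith
    have hr : (p : ℝ) ^ (-(3 / 2) : ℝ) = (p : ℝ) ^ (-(3 / 4) : ℝ) * (p : ℝ) ^ (-(3 / 4) : ℝ) := by
      rw [← Real.rpow_add hp0]; norm_num
    have hr2 : ((p ^ 2 : ℕ) : ℝ) ^ (-(3 / 4) : ℝ) = (p : ℝ) ^ (-(3 / 2) : ℝ) := by
      rw [hr, Nat.cast_pow, pow_two, Real.mul_rpow hp0.le hp0.le]
    have hinv : (p : ℝ)⁻¹ ≤ (p : ℝ) ^ (-(3 / 4) : ℝ) := by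
      rw [← Real.rpow_neg_one]
      exact Real.rpow_le_rpow_of_exponent_le (by linarith) (by norm_num)
    set t := (p : ℝ) ^ (-(3 / 4) : ℝ) with ht
    have ht0 : 0 < t := Real.rpow_pos_of_pos hp0 _
    have hc1 : |cc p| ≤ 6 * (p : ℝ)⁻¹ := by
      rw [cc_p hp]
      rcases Nat.lt_or_ge 2 p with h | h
      · have hp3 : (3 : ℝ) ≤ p := by exact_mod_cast h
        have h4 : (0 : ℝ) < p - 2 := by linarith
        have : p * w0 p - 1 = 2 / ((p : ℝ) - 2) := by unfold w0; field_simp; ring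
        rw [this, abs_of_pos (by positivity), ← div_eq_mul_inv, div_le_div_iff₀ h4 hp0]
        linarith
      · have : p = 2 := by have := hp.two_le; omega
        subst this
        rw [w0_two]; norm_num
    have hc2 : |cc (p ^ 2)| ≤ 3 := by
      rw [cc_p2 hp, abs_neg, abs_of_nonneg (mul_nonneg hp0.le (w0_nonneg hp.two_le))]
      have := w0_le hp.two_le
      rw [le_div_iff₀ hp0] at this
      linarith
    unfold ff
    rw [hr2, hr]
    have h5 : |cc p| * t ≤ 6 * t * t := by
      have : |cc p| ≤ 6 * t := by linarith
      gcongr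
    have h6 : |cc (p ^ 2)| * (t * t) ≤ 3 * (t * t) := by gcongr
    linarith

noncomputable def DD : ℝ := ∑' n, ff n

lemma DD_nonneg : 0 ≤ DD := tsum_nonneg ff_nonneg

lemma sum_ff_le (s : Finset ℕ) : ∑ n ∈ s, ff n ≤ DD :=
  ff_summable.sum_le_tsum _ (fun n _ => ff_nonneg n)

lemma cc_div_le (n : ℕ) : |cc n| / n ≤ ff n := by
  rcases Nat.eq_zero_or_pos n with rfl | hn
  · simp [ff]
  · unfold ff
    rw [div_eq_mul_inv]
    gcongr
    rw [← Real.rpow_neg_one]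
    exact Real.rpow_le_rpow_of_exponent_le (by exact_mod_cast hn) (by norm_num)

lemma cc_div_log_le (n : ℕ) : |cc n| / n * Real.log n ≤ 4 * ff n := by
  rcases Nat.eq_zero_or_pos n with rfl | hn
  · simp [ff]
  · have hn0 : (0 : ℝ) < n := by exact_mod_cast hn
    have h1 : Real.log n ≤ (n : ℝ) ^ (1 / 4 : ℝ) / (1 / 4) :=
      Real.log_le_rpow_div hn0.le (by norm_num)
    have h2 : (n : ℝ) ^ (-(3 / 4) : ℝ) = (n : ℝ)⁻¹ * (n : ℝ) ^ (1 / 4 : ℝ) := by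
      rw [← Real.rpow_neg_one, ← Real.rpow_add hn0]; norm_num
    unfold ff
    rw [h2]
    calc |cc n| / n * Real.log n ≤ |cc n| / n * ((n : ℝ) ^ (1 / 4 : ℝ) / (1 / 4)) := by gcongr
      _ = _ := by ring

lemma cc_div_summable : Summable (fun n : ℕ => |cc n| / n) :=
  Summable.of_nonneg_of_le (fun n => by positivity) cc_div_le ff_summable

lemma aa_eq (n : ℕ) : aa n = ∑ x ∈ n.divisorsAntidiagonal, cc x.1 := by
  rw [← cc_mul_zeta, ArithmeticFunction.coe_mul_zeta_apply,
    Nat.sum_divisorsAntidiagonal (fun i _ => cc i)]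

/-- bound (1) -/
lemma sum_aa_le (N : ℕ) : ∑ n ∈ Ioc 0 N, aa n ≤ DD * N := by
  rw [Finset.sum_congr rfl (fun n _ => aa_eq n), swap_sum (fun d _ => cc d)]
  simp only [Finset.sum_const, Nat.card_Ioc, Nat.sub_zero, nsmul_eq_mul]
  calc ∑ d ∈ Ioc 0 N, ((N / d : ℕ) : ℝ) * cc d ≤ ∑ d ∈ Ioc 0 N, N * ff d := by
        refine Finset.sum_le_sum fun d hd => ?_
        calc ((N / d : ℕ) : ℝ) * cc d ≤ ((N : ℝ) / d) * |cc d| :=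
              (mul_le_mul_of_nonneg_left (le_abs_self _) (by positivity)).trans
                (mul_le_mul_of_nonneg_right Nat.cast_div_le (abs_nonneg _))
          _ = N * (|cc d| / d) := by ring
          _ ≤ _ := by gcongr; exact cc_div_le d
    _ = N * ∑ d ∈ Ioc 0 N, ff d := by rw [Finset.mul_sum]
    _ ≤ N * DD := by gcongr; exact sum_ff_le _
    _ = _ := mul_comm _ _

/-- bound (2) -/
lemma sum_aa_tail (N M : ℕ) : ∑ n ∈ Ioc N M, aa n / (n : ℝ) ^ 2 ≤ 2 * DD / (N + 1) := by
  have h1 : ∑ n ∈ Ioc N M, aa n / (n : ℝ) ^ 2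
      = ∑ n ∈ Ioc 0 M, ∑ x ∈ n.divisorsAntidiagonal,
          (if N < x.1 * x.2 then cc x.1 / ((x.1 : ℝ) * x.2) ^ 2 else 0) := by
    have : Ioc N M = (Ioc 0 M).filter (fun n => N < n) := by
      ext n; simp only [mem_filter, mem_Ioc]; omega
    rw [this, Finset.sum_filter]
    refine Finset.sum_congr rfl fun n hn => ?_
    split_ifs with h
    · rw [aa_eq, Finset.sum_div]
      refine Finset.sum_congr rfl fun x hx => ?_
      rw [Nat.mem_divisorsAntidiagonal] at hx
      rw [hx.1, if_pos h, ← hx.1, Nat.cast_mul]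
    · symm
      refine Finset.sum_eq_zero fun x hx => ?_
      rw [Nat.mem_divisorsAntidiagonal] at hx
      rw [hx.1, if_neg h]
  rw [h1, swap_sum (fun d m => if N < d * m then cc d / ((d : ℝ) * m) ^ 2 else 0)]
  calc _ ≤ ∑ d ∈ Ioc 0 M, ff d * (2 / (N + 1)) := by
        refine Finset.sum_le_sum fun d hd => ?_
        rw [mem_Ioc] at hd
        have hd0 : (0 : ℝ) < d := by exact_mod_cast hd.1
        rw [← Finset.sum_filter]
        calc _ ≤ ∑ m ∈ (Ioc 0 (M / d)).filter (fun m => N < d * m),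
                |cc d| / (d : ℝ) ^ 2 * ((m : ℝ) ^ 2)⁻¹ := by
              refine Finset.sum_le_sum fun m _ => ?_
              calc cc d / ((d : ℝ) * m) ^ 2 ≤ |cc d| / ((d : ℝ) * m) ^ 2 := by
                    gcongr; exact le_abs_self _
                _ = _ := by rw [mul_pow, div_mul_eq_div_div, ← div_eq_mul_inv]
          _ ≤ ∑ m ∈ Ioo (N / d) (M / d + 1), |cc d| / (d : ℝ) ^ 2 * ((m : ℝ) ^ 2)⁻¹ := by
              refine Finset.sum_le_sum_of_subset_of_nonneg ?_ (fun _ _ _ => by positivity)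
              intro m hm
              simp only [mem_filter, mem_Ioc, mem_Ioo] at hm ⊢
              refine ⟨?_, by omega⟩
              rw [Nat.div_lt_iff_lt_mul hd.1]
              linarith [mul_comm d m]
          _ = |cc d| / (d : ℝ) ^ 2 * ∑ m ∈ Ioo (N / d) (M / d + 1), ((m : ℝ) ^ 2)⁻¹ := by
              rw [Finset.mul_sum]
          _ ≤ |cc d| / (d : ℝ) ^ 2 * (2 / ((N / d : ℕ) + 1)) := by
              gcongr; exact sum_Ioo_inv_sq_le _ _
          _ ≤ |cc d| / (d : ℝ) ^ 2 * (2 * d / (N + 1)) := by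
              refine mul_le_mul_of_nonneg_left ?_ (by positivity)
              rw [div_le_div_iff₀ (by positivity) (by positivity)]
              have hb : N + 1 ≤ d * (N / d + 1) := Nat.lt_mul_div_succ N hd.1
              have hb' : (N : ℝ) + 1 ≤ d * ((N / d : ℕ) + 1) := by exact_mod_cast hb
              linarith
          _ = |cc d| / d * (2 / (N + 1)) := by field_simp
          _ ≤ _ := by gcongr; exact cc_div_le d
    _ = (∑ d ∈ Ioc 0 M, ff d) * (2 / (N + 1)) := by rw [Finset.sum_mul]
    _ ≤ DD * (2 / (N + 1)) := by gcongr; exact sum_ff_le _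
    _ = _ := by ring

noncomputable def GG (N : ℕ) : ℝ := ∑ n ∈ Ioc 0 N, mulsf w0 n

noncomputable def lam : ℝ := ∑' n : ℕ, cc n / n

lemma GG_eq (N : ℕ) : GG N = ∑ d ∈ Ioc 0 N, cc d / d * ∑ m ∈ Ioc 0 (N / d), (m : ℝ)⁻¹ := by
  have h1 : GG N = ∑ n ∈ Ioc 0 N, ∑ x ∈ n.divisorsAntidiagonal, cc x.1 / x.1 * (x.2 : ℝ)⁻¹ := by
    refine Finset.sum_congr rfl fun n hn => ?_
    rw [mem_Ioc] at hn
    have hn0 : (n : ℝ) ≠ 0 := by exact_mod_cast hn.1.ne'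
    have : mulsf w0 n = aa n / n := by rw [aa_apply]; field_simp
    rw [this, aa_eq, Finset.sum_div]
    refine Finset.sum_congr rfl fun x hx => ?_
    rw [Nat.mem_divisorsAntidiagonal] at hx
    rw [← hx.1, Nat.cast_mul, div_mul_eq_div_div, ← div_eq_mul_inv]
  rw [h1, swap_sum (fun d m => cc d / d * (m : ℝ)⁻¹)]
  simp only [Finset.mul_sum]

lemma GG_asymp {N : ℕ} (hN : 1 ≤ N) : |GG N - lam * Real.log N| ≤ 9 * DD := by
  have hN0 : (0 : ℝ) < N := by exact_mod_cast hN
  have hlogN : 0 ≤ Real.log N := Real.log_natCast_nonneg N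
  have hsum : Summable (fun n : ℕ => cc n / (n : ℝ)) := by
    refine Summable.of_norm ?_
    simpa [Real.norm_eq_abs, abs_div] using cc_div_summable
  set F : ℕ → ℝ := fun n => if n ∈ Ioc 0 N then 0 else cc n / n with hF
  have hFs : Summable F := by
    refine Summable.of_norm_bounded cc_div_summable fun n => ?_
    simp only [hF]
    split_ifs
    · simp; positivity
    · rw [Real.norm_eq_abs, abs_div, Nat.abs_cast]
  have hlam : lam = ∑ n ∈ Ioc 0 N, cc n / n + ∑' n, F n := by
    have h1 : HasSum (fun n : ℕ => if n ∈ Ioc 0 N then cc n / (n : ℝ) else 0)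
        (∑ n ∈ Ioc 0 N, cc n / n) := by
      have := hasSum_sum_of_ne_finset_zero (s := Ioc 0 N)
        (L := SummationFilter.unconditional ℕ)
        (f := fun n : ℕ => if n ∈ Ioc 0 N then cc n / (n : ℝ) else 0)
        (fun b hb => by simp only [if_neg hb])
      rwa [Finset.sum_congr rfl (fun n hn => if_pos hn)] at this
    have h2 := (h1.add hFs.hasSum).tsum_eq
    rw [← h2]
    unfold lam
    congr 1
    ext n
    simp only [hF]
    split_ifs <;> simp
  have htail : |(∑' n, F n) * Real.log N| ≤ 4 * DD := by
    rw [← tsum_mul_right]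
    have hb : ∀ n, ‖F n * Real.log N‖ ≤ 4 * ff n := by
      intro n
      simp only [hF]
      split_ifs with h
      · simp; exact ff_nonneg n
      · rcases Nat.eq_zero_or_pos n with rfl | hn
        · simp; exact ff_nonneg 0
        · have hNn : N < n := by simp only [mem_Ioc] at h; omega
          rw [norm_mul, Real.norm_eq_abs, Real.norm_eq_abs, abs_div, Nat.abs_cast,
            abs_of_nonneg hlogN]
          refine le_trans ?_ (cc_div_log_le n)
          gcongr
    have := tsum_of_norm_bounded (ff_summable.mul_left 4).hasSum hb
    rwa [tsum_mul_left] at this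
  have hmain : |GG N - (∑ n ∈ Ioc 0 N, cc n / n) * Real.log N| ≤ 5 * DD := by
    rw [GG_eq, Finset.sum_mul, ← Finset.sum_sub_distrib]
    refine (Finset.abs_sum_le_sum_abs _ _).trans ?_
    calc _ ≤ ∑ d ∈ Ioc 0 N, 5 * ff d := by
          refine Finset.sum_le_sum fun d hd => ?_
          rw [mem_Ioc] at hd
          have hd0 : (0 : ℝ) < d := by exact_mod_cast hd.1
          have hy1 : (1 : ℝ) ≤ (N : ℝ) / d := by
            rw [le_div_iff₀ hd0, one_mul]; exact_mod_cast hd.2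
          have hfl : ⌊(N : ℝ) / d⌋₊ = N / d := Nat.floor_div_eq_div N d
          have hlow := log_le_harmonic_floor ((N : ℝ) / d) (by linarith)
          have hup := harmonic_floor_le_one_add_log ((N : ℝ) / d) hy1
          have hH : ((harmonic (N / d) : ℚ) : ℝ) = ∑ m ∈ Ioc 0 (N / d), (m : ℝ)⁻¹ := by
            rw [harmonic_eq_sum_Icc]
            push_cast
            rfl
          rw [hfl, hH, Real.log_div hN0.ne' hd0.ne'] at hlow hup
          set H := ∑ m ∈ Ioc 0 (N / d), (m : ℝ)⁻¹
          have hlogd : 0 ≤ Real.log d := Real.log_natCast_nonneg d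
          have h1 : |H - Real.log N| ≤ 1 + Real.log d := by
            rw [abs_le]; constructor <;> linarith
          calc |cc d / d * H - cc d / d * Real.log N| = |cc d| / d * |H - Real.log N| := by
                rw [← mul_sub, abs_mul, abs_div, Nat.abs_cast]
            _ ≤ |cc d| / d * (1 + Real.log d) := by gcongr
            _ = |cc d| / d + |cc d| / d * Real.log d := by ring
            _ ≤ ff d + 4 * ff d := add_le_add (cc_div_le d) (cc_div_log_le d)
            _ = _ := by ring
      _ = 5 * ∑ d ∈ Ioc 0 N, ff d := by rw [Finset.mul_sum]
      _ ≤ _ := by gcongr; exact sum_ff_le _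
  rw [hlam]
  have : GG N - (∑ n ∈ Ioc 0 N, cc n / n + ∑' n, F n) * Real.log N
      = (GG N - (∑ n ∈ Ioc 0 N, cc n / n) * Real.log N) - (∑' n, F n) * Real.log N := by ring
  rw [this]
  refine (abs_sub _ _).trans ?_
  linarith

noncomputable def ws (s : Finset ℕ) (p : ℕ) : ℝ := if p ∈ s then 0 else w0 p

lemma ws_empty : ws ∅ = w0 := by ext p; simp [ws]

lemma ws_insert (s : Finset ℕ) (p : ℕ) : Function.update (ws s) p 0 = ws (insert p s) := by
  ext r
  by_cases h : r = p
  · subst h; simp [ws]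
  · rw [Function.update_of_ne h]; simp [ws, h]

lemma ws_nonneg (s : Finset ℕ) (p : ℕ) (hp : p.Prime) : 0 ≤ ws s p := by
  unfold ws; split_ifs
  · exact le_rfl
  · exact w0_nonneg hp.two_le

lemma ws_le (s : Finset ℕ) (p : ℕ) (hp : p.Prime) : ws s p ≤ w0 p := by
  unfold ws; split_ifs
  · exact w0_nonneg hp.two_le
  · exact le_rfl

noncomputable def GS (s : Finset ℕ) (N : ℕ) : ℝ := ∑ n ∈ Ioc 0 N, mulsf (ws s) n

lemma GS_empty (N : ℕ) : GS ∅ N = GG N := by unfold GS GG; rw [ws_empty]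

lemma GS_insert {s : Finset ℕ} {p : ℕ} (hp : p.Prime) (hs : p ∉ s) (N : ℕ) :
    GS s N = GS (insert p s) N + w0 p * GS (insert p s) (N / p) := by
  have := sum_mulsf_step (ws s) hp N
  rw [ws_insert] at this
  have h2 : ws s p = w0 p := by simp [ws, hs]
  rw [h2] at this
  exact this

lemma GS_diff {s : Finset ℕ} {M N : ℕ} (h : M ≤ N) :
    0 ≤ GS s N - GS s M ∧ GS s N - GS s M ≤ GG N - GG M := by
  have key : ∀ w : ℕ → ℝ, ∑ n ∈ Ioc 0 N, mulsf w n - ∑ n ∈ Ioc 0 M, mulsf w n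
      = ∑ n ∈ Ioc M N, mulsf w n := by
    intro w
    rw [sub_eq_iff_eq_add, ← Finset.sum_Ioc_consecutive _ (Nat.zero_le M) h, add_comm]
  unfold GS GG
  rw [key, key]
  exact ⟨Finset.sum_nonneg fun n _ => mulsf_nonneg (ws_nonneg s) n,
    Finset.sum_le_sum fun n _ => mulsf_mono (ws_nonneg s) (ws_le s) n⟩

lemma GG_diff : ∃ B : ℝ, 0 ≤ B ∧ ∀ (p N : ℕ), p.Prime → GG N - GG (N / p) ≤ B * Real.log p := by
  have hlog2 : 0 < Real.log 2 := Real.log_pos (by norm_num)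
  have hD := DD_nonneg
  refine ⟨2 * |lam| + 18 * DD / Real.log 2, by positivity, fun p N hp => ?_⟩
  have hl : Real.log 2 ≤ Real.log p := Real.log_le_log (by norm_num) (by exact_mod_cast hp.two_le)
  have hp0 : (0 : ℝ) < p := by exact_mod_cast hp.pos
  have h18 : 18 * DD ≤ 18 * DD / Real.log 2 * Real.log p := by
    rw [div_mul_eq_mul_div, le_div_iff₀ hlog2]; gcongr
  have hla := abs_nonneg lam
  have hlap : 0 ≤ |lam| * Real.log p := mul_nonneg hla (by linarith)
  rcases Nat.eq_zero_or_pos N with rfl | hN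
  · simp; apply mul_nonneg (by positivity) (by linarith)
  have h1 := GG_asymp hN
  rw [abs_le] at h1
  have hN0 : (0 : ℝ) < N := by exact_mod_cast hN
  rcases Nat.eq_zero_or_pos (N / p) with h0 | h0
  · rw [h0]
    have : GG 0 = 0 := by simp [GG]
    rw [this]
    have hNp : N < p := by
      rcases Nat.div_eq_zero_iff.1 h0 with h | h
      · exact absurd h hp.ne_zero
      · exact h
    have h2 : Real.log N ≤ Real.log p := Real.log_le_log hN0 (by exact_mod_cast hNp.le)
    have h3 : lam * Real.log N ≤ |lam| * Real.log p :=
      mul_le_mul (le_abs_self _) h2 (Real.log_natCast_nonneg N) hla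
    linarith [add_mul (2 * |lam|) (18 * DD / Real.log 2) (Real.log p)]
  · have h2 := GG_asymp h0
    rw [abs_le] at h2
    have hM0 : (1 : ℝ) ≤ ((N / p : ℕ) : ℝ) := by exact_mod_cast h0
    have hup : Real.log N ≤ Real.log ((N / p : ℕ) : ℝ) + Real.log p + Real.log 2 := by
      rw [← Real.log_mul (by linarith) hp0.ne', ← Real.log_mul (by positivity) (by norm_num)]
      apply Real.log_le_log hN0
      have hb' : (N : ℝ) < p * ((N / p : ℕ) + 1) := by exact_mod_cast Nat.lt_mul_div_succ N hp.pos
      nlinarith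
    have hlow : Real.log ((N / p : ℕ) : ℝ) ≤ Real.log N :=
      Real.log_le_log (by linarith) (by exact_mod_cast Nat.div_le_self _ _)
    have h3 : lam * (Real.log N - Real.log ((N / p : ℕ) : ℝ)) ≤ |lam| * (2 * Real.log p) :=
      mul_le_mul (le_abs_self _) (by linarith) (by linarith) hla
    linarith [add_mul (2 * |lam|) (18 * DD / Real.log 2) (Real.log p),
      mul_sub lam (Real.log N) (Real.log ((N / p : ℕ) : ℝ))]

lemma PP_ge_one {s : Finset ℕ} (hs : ∀ p ∈ s, p.Prime) : 1 ≤ PP s := by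
  unfold PP
  refine Finset.one_le_prod fun p hp => ?_
  have := w0_nonneg (hs p hp).two_le
  linarith

lemma VV_nonneg {s : Finset ℕ} (hs : ∀ p ∈ s, p.Prime) : 0 ≤ VV s :=
  Finset.sum_nonneg fun p hp => mul_nonneg (w0_nonneg (hs p hp).two_le) (Real.log_natCast_nonneg p)

lemma GS_bound : ∃ B : ℝ, 0 ≤ B ∧ ∀ (s : Finset ℕ), (∀ p ∈ s, p.Prime) → ∀ N : ℕ,
    0 ≤ PP s * GS s N - GG N ∧ PP s * GS s N - GG N ≤ B * (PP s * VV s) := by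
  obtain ⟨B, hB, h⟩ := GG_diff
  refine ⟨B, hB, fun s hs N => ?_⟩
  induction s using Finset.induction with
  | empty => simp [PP, VV, GS_empty]
  | insert p s hps ih =>
    obtain ⟨ih1, ih2⟩ := ih (fun r hr => hs r (mem_insert_of_mem hr))
    have hp := hs p (mem_insert_self _ _)
    have hw := w0_nonneg hp.two_le
    have hP := PP_ge_one (fun r hr => hs r (mem_insert_of_mem hr))
    have hV := VV_nonneg (fun r hr => hs r (mem_insert_of_mem hr))
    have hPi : PP (insert p s) = (1 + w0 p) * PP s := by
      unfold PP; rw [Finset.prod_insert hps]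
    have hVi : VV (insert p s) = w0 p * Real.log p + VV s := by
      unfold VV; rw [Finset.sum_insert hps]
    have hG := GS_insert hp hps N
    obtain ⟨hd1, hd2⟩ := GS_diff (s := insert p s) (Nat.div_le_self N p)
    have hd3 := h p N hp
    have hl : 0 ≤ Real.log p := Real.log_natCast_nonneg p
    have heq : PP (insert p s) * GS (insert p s) N - GG N
        = (PP s * GS s N - GG N)
          + PP s * w0 p * (GS (insert p s) N - GS (insert p s) (N / p)) := by
      rw [hPi, hG]; ring
    have hPw : 0 ≤ PP s * w0 p := mul_nonneg (by linarith) hw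
    rw [heq]
    refine ⟨add_nonneg ih1 (mul_nonneg hPw hd1), ?_⟩
    have h4 : PP s * w0 p * (GS (insert p s) N - GS (insert p s) (N / p))
        ≤ PP s * w0 p * (B * Real.log p) := by
      apply mul_le_mul_of_nonneg_left _ hPw; linarith
    have h5 : 0 ≤ B * (w0 p * PP s * (w0 p * Real.log p + VV s)) := by
      have : 0 ≤ w0 p * Real.log p := mul_nonneg hw hl
      have : 0 ≤ w0 p * PP s := by linarith [mul_comm (w0 p) (PP s)]
      positivity
    rw [hPi, hVi]
    nlinarith

noncomputable def tw (p : ℕ) : ℝ := if 2 < p then 1 - 1 / ((p : ℝ) - 1) ^ 2 else 1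

lemma tw_hasProd : HasProd (fun p : Nat.Primes => tw (p : ℕ)) twinC := by
  have : Multipliable (fun p : Nat.Primes => tw (p : ℕ)) := by
    have h1 : Summable (fun p : Nat.Primes => ‖tw (p : ℕ) - 1‖) := by
      have h2 : Summable (fun n : ℕ => 4 * (1 / (n : ℝ) ^ 2)) :=
        (Real.summable_one_div_nat_pow.2 (by norm_num)).mul_left 4
      have h3 : Summable (fun p : Nat.Primes => 4 * (1 / ((p : ℕ) : ℝ) ^ 2)) :=
        h2.comp_injective (i := fun p : Nat.Primes => (p : ℕ)) Nat.Primes.coe_nat_injective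
      refine Summable.of_nonneg_of_le (fun _ => norm_nonneg _) (fun p => ?_) h3
      have hp2 : (2 : ℝ) ≤ (p : ℕ) := by exact_mod_cast p.2.two_le
      unfold tw
      split_ifs with h
      · have h5 : (0 : ℝ) < (p : ℕ) - 1 := by linarith
        rw [sub_sub_cancel_left, norm_neg, Real.norm_eq_abs, abs_of_nonneg (by positivity),
          mul_one_div, div_le_div_iff₀ (by positivity) (by positivity)]
        nlinarith
      · simp
    have := multipliable_one_add_of_summable h1
    simpa using this
  exact this.hasProd

lemma summable_gs (s : Finset ℕ) : Summable (fun n : ℕ => mulsf (ws s) n / n) := by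
  have h0 : Summable (fun n : ℕ => aa n / (n : ℝ) ^ 2) := by
    refine summable_of_sum_range_le (c := 2 * DD) (fun n => div_nonneg (aa_nonneg n) (by positivity))
      fun n => ?_
    have h := sum_aa_tail 0 n
    simp only [Nat.cast_zero, zero_add, div_one] at h
    refine le_trans ?_ h
    have : ∑ i ∈ range n, aa i / (i : ℝ) ^ 2 ≤ ∑ i ∈ insert 0 (Ioc 0 n), aa i / (i : ℝ) ^ 2 := by
      refine Finset.sum_le_sum_of_subset_of_nonneg ?_
        (fun i _ _ => div_nonneg (aa_nonneg i) (by positivity))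
      intro i hi
      simp only [mem_range, mem_insert, mem_Ioc] at hi ⊢
      omega
    rw [Finset.sum_insert (by simp)] at this
    simpa using this
  refine Summable.of_nonneg_of_le (fun n => div_nonneg (mulsf_nonneg (ws_nonneg s) n)
    (by positivity)) (fun n => ?_) h0
  rcases Nat.eq_zero_or_pos n with rfl | hn
  · simp
  · have hn0 : (0 : ℝ) < n := by exact_mod_cast hn
    have : aa n / (n : ℝ) ^ 2 = mulsf w0 n / n := by rw [aa_apply]; field_simp
    rw [this]
    gcongr
    exact mulsf_mono (ws_nonneg s) (ws_le s) n

noncomputable def KK (s : Finset ℕ) : ℝ := ∑' n : ℕ, mulsf (ws s) n / n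

lemma KK_hasProd (s : Finset ℕ) :
    HasProd (fun p : Nat.Primes => 1 + ws s (p : ℕ) / (p : ℕ)) (KK s) := by
  have h := EulerProduct.eulerProduct_hasProd (f := fun n : ℕ => mulsf (ws s) n / (n : ℝ))
    (by simp [(mulsf_mult _).1])
    (by intro m n h; simp only [(mulsf_mult (ws s)).map_mul_of_coprime h]; push_cast
        rw [mul_div_mul_comm])
    (summable_gs s).norm (by simp)
  suffices key : (fun p : Nat.Primes => 1 + ws s (p : ℕ) / (p : ℕ)) = fun p : Nat.Primes =>
      ∑' e : ℕ, mulsf (ws s) ((p : ℕ) ^ e) / (((p : ℕ) ^ e : ℕ) : ℝ) by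
    rw [key]; exact h
  funext p
  rw [(hasSum_three (f := fun e : ℕ => mulsf (ws s) ((p : ℕ) ^ e) / (((p : ℕ) ^ e : ℕ) : ℝ))
    (fun k => by
      have := mulsf_prime_pow (ws s) p.2 (k + 1)
      simp only [show k + 1 + 2 = k + 3 by ring] at this
      simp [this])).tsum_eq]
  have := mulsf_prime_pow (ws s) p.2 0
  simp only [zero_add] at this
  simp [(mulsf_mult (ws s)).1, this, mulsf_prime (ws s) p.2]

lemma lam_hasProd :
    HasProd (fun p : Nat.Primes => 1 + cc (p : ℕ) / (p : ℕ) + cc ((p : ℕ) ^ 2) / ((p : ℕ) : ℝ) ^ 2)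
      lam := by
  have h := EulerProduct.eulerProduct_hasProd (f := fun n : ℕ => cc n / (n : ℝ))
    (by simp [cc_mult.1])
    (by intro m n h; simp only [cc_mult.map_mul_of_coprime h]; push_cast
        rw [mul_div_mul_comm])
    (by simpa [Real.norm_eq_abs, abs_div] using cc_div_summable) (by simp)
  suffices key : (fun p : Nat.Primes => 1 + cc (p : ℕ) / (p : ℕ) +
      cc ((p : ℕ) ^ 2) / ((p : ℕ) : ℝ) ^ 2) = fun p : Nat.Primes =>
      ∑' e : ℕ, cc ((p : ℕ) ^ e) / (((p : ℕ) ^ e : ℕ) : ℝ) by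
    rw [key]; exact h
  funext p
  rw [(hasSum_three (f := fun e : ℕ => cc ((p : ℕ) ^ e) / (((p : ℕ) ^ e : ℕ) : ℝ))
    (fun k => by simp [cc_p3 p.2 k])).tsum_eq]
  simp [cc_mult.1]

lemma prime_cases {p : ℕ} (hp : p.Prime) : p = 2 ∨ (2 < p ∧ (3 : ℝ) ≤ p) := by
  rcases Nat.lt_or_ge 2 p with h | h
  · exact Or.inr ⟨h, by exact_mod_cast h⟩
  · left; have := hp.two_le; omega

lemma twinC_lam : 2 * twinC * lam = 1 := by
  classical
  have h := tw_hasProd.mul lam_hasProd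
  have h2 : HasProd (fun p : Nat.Primes => tw (p : ℕ) *
      (1 + cc (p : ℕ) / (p : ℕ) + cc ((p : ℕ) ^ 2) / ((p : ℕ) : ℝ) ^ 2)) (1 / 2) := by
    have h3 : ∀ p : Nat.Primes, tw (p : ℕ) *
      (1 + cc (p : ℕ) / (p : ℕ) + cc ((p : ℕ) ^ 2) / ((p : ℕ) : ℝ) ^ 2)
        = if p = ⟨2, Nat.prime_two⟩ then 1 / 2 else 1 := by
      intro p
      rw [cc_p p.2, cc_p2 p.2]
      rcases prime_cases p.2 with h | ⟨h, h3⟩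
      · have : p = ⟨2, Nat.prime_two⟩ := Subtype.ext h
        rw [if_pos this, h, w0_two]
        norm_num [tw]
      · have : p ≠ ⟨2, Nat.prime_two⟩ := by
          rintro rfl; simp at h
        rw [if_neg this]
        unfold tw w0
        rw [if_pos h]
        have h4 : ((p : ℕ) : ℝ) - 2 ≠ 0 := by linarith
        have h5 : ((p : ℕ) : ℝ) - 1 ≠ 0 := by linarith
        have h6 : ((p : ℕ) : ℝ) ≠ 0 := by linarith
        field_simp
        ring
    rw [funext h3]
    have gen : ∀ b : Nat.Primes, HasProd (fun p : Nat.Primes =>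
        @ite ℝ (p = b) (Classical.propDecidable _) (1 / 2 : ℝ) 1) (1 / 2) := by
      intro b
      have h7 := hasProd_single (f := fun p : Nat.Primes =>
        @ite ℝ (p = b) (Classical.propDecidable _) (1 / 2 : ℝ) 1) b (fun p hp => if_neg hp)
      rw [if_pos rfl] at h7
      exact h7
    exact gen _
  have := h.unique h2
  linarith

lemma twinC_KK {q : ℕ} (hq : 1 ≤ q) (h2 : 2 ∣ q) :
    2 * twinC * PP q.primeFactors * KK q.primeFactors = q / (q.totient : ℝ) := by
  set s := q.primeFactors with hs
  have h := tw_hasProd.mul (KK_hasProd s)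
  have hS : ∀ p : Nat.Primes, tw (p : ℕ) * (1 + ws s (p : ℕ) / (p : ℕ))
      = if (p : ℕ) ∈ s then tw (p : ℕ) else 1 := by
    intro p
    unfold ws
    split_ifs with hps
    · simp
    · rcases prime_cases p.2 with h | ⟨h, h3⟩
      · exfalso
        apply hps
        rw [h, hs, Nat.mem_primeFactors]
        exact ⟨Nat.prime_two, h2, by omega⟩
      · unfold tw w0
        rw [if_pos h]
        have h4 : ((p : ℕ) : ℝ) - 2 ≠ 0 := by linarith
        have h5 : ((p : ℕ) : ℝ) - 1 ≠ 0 := by linarith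
        have h6 : ((p : ℕ) : ℝ) ≠ 0 := by linarith
        field_simp
        ring
  have h3 : HasProd (fun p : Nat.Primes => tw (p : ℕ) * (1 + ws s (p : ℕ) / (p : ℕ)))
      (∏ p ∈ s, tw p) := by
    have h4 := hasProd_prod_of_ne_finset_one (s := s.subtype Nat.Prime)
      (f := fun p : Nat.Primes => if (p : ℕ) ∈ s then tw (p : ℕ) else 1)
      (L := SummationFilter.unconditional _)
      (fun p hp => by
        have : (p : ℕ) ∉ s := fun h => hp (Finset.mem_subtype.2 h)
        rw [if_neg this])
    have h5 : ∏ p ∈ s.subtype Nat.Prime, (if (p : ℕ) ∈ s then tw (p : ℕ) else 1) = ∏ p ∈ s, tw p := by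
      rw [Finset.prod_subtype_of_mem (p := Nat.Prime) (fun n => if n ∈ s then tw n else 1)
        (fun x hx => Nat.prime_of_mem_primeFactors hx)]
      exact Finset.prod_congr rfl fun p hp => if_pos hp
    rw [← h5]
    rw [funext hS]
    exact h4
  have h6 := h.unique h3
  have h7 : 2 * twinC * PP s * KK s = 2 * (PP s * ∏ p ∈ s, tw p) := by rw [← h6]; ring
  have h2s : 2 ∈ s := by rw [hs, Nat.mem_primeFactors]; exact ⟨Nat.prime_two, h2, by omega⟩
  have h8 : 2 * (PP s * ∏ p ∈ s, tw p) = ∏ p ∈ s, (1 - (p : ℝ)⁻¹)⁻¹ := by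
    unfold PP
    rw [← Finset.prod_mul_distrib, ← Finset.mul_prod_erase s _ h2s,
      ← Finset.mul_prod_erase s (fun p : ℕ => (1 - (p : ℝ)⁻¹)⁻¹) h2s, ← mul_assoc]
    congr 1
    · rw [w0_two]; norm_num [tw]
    · refine Finset.prod_congr rfl fun p hp => ?_
      rw [Finset.mem_erase] at hp
      rcases prime_cases (Nat.prime_of_mem_primeFactors hp.2) with h | ⟨h, h3⟩
      · exact absurd h hp.1
      · unfold tw w0
        rw [if_pos h]
        have h4 : (p : ℝ) - 2 ≠ 0 := by linarith
        have h5 : (p : ℝ) - 1 ≠ 0 := by linarith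
        have h6 : (p : ℝ) ≠ 0 := by linarith
        have h9 : 1 - (p : ℝ)⁻¹ = (p - 1) / p := by field_simp
        rw [h9, inv_div]
        field_simp
        ring
  have h10 : (q.totient : ℝ) = q * ∏ p ∈ s, (1 - (p : ℝ)⁻¹) := by
    have := Nat.totient_eq_mul_prod_factors q
    have h11 := congrArg (fun x : ℚ => (x : ℝ)) this
    simpa using h11
  have hq0 : (q : ℝ) ≠ 0 := by exact_mod_cast (by omega : q ≠ 0)
  rw [h7, h8, h10, Finset.prod_inv_distrib, div_mul_eq_div_div, div_self hq0, one_div]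

lemma sing_eq {q j : ℕ} (hq : 1 ≤ q) (h2 : 2 ∣ q) (hj : 1 ≤ j) :
    singSeries (j * q) = 2 * twinC * PP q.primeFactors *
      ∑ d ∈ j.divisors, mulsf (ws q.primeFactors) d := by
  have hj0 : j ≠ 0 := by omega
  have hq0 : q ≠ 0 := by omega
  unfold singSeries
  rw [if_pos ⟨h2.mul_left j, Nat.mul_ne_zero hj0 hq0⟩, sum_divisors_mulsf _ hj0, mul_assoc (2 * twinC) (PP _)]
  congr 1
  rw [Nat.primeFactors_mul hj0 hq0]
  have h1 : ∏ p ∈ (j.primeFactors ∪ q.primeFactors) with 2 < p, ((p : ℝ) - 1) / ((p : ℝ) - 2)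
      = ∏ p ∈ j.primeFactors ∪ q.primeFactors, (1 + w0 p) := by
    rw [Finset.prod_filter]
    refine Finset.prod_congr rfl fun p hp => ?_
    have hpp : p.Prime := by
      rcases Finset.mem_union.1 hp with h | h <;> exact Nat.prime_of_mem_primeFactors h
    rcases prime_cases hpp with h | ⟨h, h3⟩
    · rw [h, w0_two]; simp
    · rw [if_pos h]
      unfold w0
      have h4 : (p : ℝ) - 2 ≠ 0 := by linarith
      field_simp
      ring
  rw [h1]
  unfold PP
  rw [← Finset.sdiff_union_self_eq_union, Finset.prod_union Finset.sdiff_disjoint, mul_comm]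
  congr 1
  rw [Finset.sdiff_eq_filter, Finset.prod_filter]
  refine Finset.prod_congr rfl fun p _ => ?_
  unfold ws
  by_cases h : p ∈ q.primeFactors <;> simp [h]

/-- elementary quadratic sum -/
lemma quad_sum (x : ℝ) (d M : ℕ) (hd : 1 ≤ d) (h1 : (M : ℝ) ≤ x / d) (h2 : x / d ≤ M + 1) :
    0 ≤ ∑ m ∈ Ioc 0 M, (x - (d : ℝ) * m) - (x ^ 2 / (2 * d) - x / 2) ∧
    ∑ m ∈ Ioc 0 M, (x - (d : ℝ) * m) - (x ^ 2 / (2 * d) - x / 2) ≤ d := by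
  have hs : ∀ M : ℕ, ∑ m ∈ Ioc 0 M, (x - (d : ℝ) * m) = M * x - d * (M * (M + 1) / 2) := by
    intro M
    induction M with
    | zero => simp
    | succ k ih =>
      rw [Finset.sum_Ioc_succ_top (Nat.zero_le k), ih]; push_cast; ring
  have hd0 : (0 : ℝ) < d := by exact_mod_cast hd
  obtain ⟨y, hy⟩ : ∃ y, y = x / d := ⟨_, rfl⟩
  have hx : x = d * y := by rw [hy]; field_simp
  rw [← hy] at h1 h2
  have e : ∑ m ∈ Ioc 0 M, (x - (d : ℝ) * m) - (x ^ 2 / (2 * d) - x / 2)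
      = d * ((y - M) * (M + 1 - y) / 2) := by
    rw [hs, hx]; field_simp; ring
  rw [e]
  have h3 : 0 ≤ (y - M) * (M + 1 - y) := mul_nonneg (by linarith) (by linarith)
  have h4 : (y - M) * (M + 1 - y) ≤ 1 := by nlinarith
  constructor
  · positivity
  · nlinarith

lemma KK_tail (s : Finset ℕ) (N : ℕ) :
    0 ≤ KK s - ∑ n ∈ Ioc 0 N, mulsf (ws s) n / n ∧
    KK s - ∑ n ∈ Ioc 0 N, mulsf (ws s) n / n ≤ 2 * DD / (N + 1) := by
  have hnn : ∀ n : ℕ, 0 ≤ mulsf (ws s) n / n := fun n =>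
    div_nonneg (mulsf_nonneg (ws_nonneg s) n) (by positivity)
  constructor
  · rw [sub_nonneg]
    exact (summable_gs s).sum_le_tsum _ (fun n _ => hnn n)
  · rw [sub_le_iff_le_add]
    refine (summable_gs s).tsum_le_of_sum_range_le fun M => ?_
    have h1 : ∑ i ∈ range M, mulsf (ws s) i / i ≤ ∑ i ∈ insert 0 (Ioc 0 (N + M)), mulsf (ws s) i / i := by
      refine Finset.sum_le_sum_of_subset_of_nonneg ?_ (fun i _ _ => hnn i)
      intro i hi
      simp only [mem_range, mem_insert, mem_Ioc] at hi ⊢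
      omega
    rw [Finset.sum_insert (by simp), ← Finset.sum_Ioc_consecutive _ (Nat.zero_le N)
      (Nat.le_add_right N M)] at h1
    have h2 : ∑ i ∈ Ioc N (N + M), mulsf (ws s) i / i ≤ ∑ n ∈ Ioc N (N + M), aa n / (n : ℝ) ^ 2 := by
      refine Finset.sum_le_sum fun n hn => ?_
      have hn0 : (0 : ℝ) < n := by
        have := (Finset.mem_Ioc.1 hn).1
        exact_mod_cast (by omega : 0 < n)
      have : aa n / (n : ℝ) ^ 2 = mulsf w0 n / n := by rw [aa_apply]; field_simp
      rw [this]
      gcongr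
      exact mulsf_mono (ws_nonneg s) (ws_le s) n
    have h3 := sum_aa_tail N (N + M)
    simp only [Nat.cast_zero, div_zero, zero_add] at h1
    linarith

/-- the weighted sum over `d` -/
lemma weighted (s : Finset ℕ) (x : ℝ) (N : ℕ) (h1 : (N : ℝ) ≤ x) (h2 : x ≤ N + 1) :
    |∑ j ∈ Ioc 0 N, (x - j) * ∑ d ∈ j.divisors, mulsf (ws s) d
      - (x ^ 2 / 2 * KK s - x / 2 * GS s N)| ≤ 2 * DD * x + DD := by
  have hD := DD_nonneg
  have hN0 : (0 : ℝ) ≤ N := Nat.cast_nonneg N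
  have hg : ∀ n, 0 ≤ mulsf (ws s) n := mulsf_nonneg (ws_nonneg s)
  have e1 : ∑ j ∈ Ioc 0 N, (x - j) * ∑ d ∈ j.divisors, mulsf (ws s) d
      = ∑ d ∈ Ioc 0 N, mulsf (ws s) d * ∑ m ∈ Ioc 0 (N / d), (x - (d : ℝ) * m) := by
    have := swap_sum (fun d m => mulsf (ws s) d * (x - (d : ℝ) * m)) N
    simp only [← Finset.mul_sum] at this
    rw [← this]
    refine Finset.sum_congr rfl fun j hj => ?_
    rw [Nat.sum_divisorsAntidiagonal (f := fun d m => mulsf (ws s) d * (x - (d : ℝ) * m)),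
      Finset.mul_sum]
    refine Finset.sum_congr rfl fun d hd => ?_
    have hdj := Nat.dvd_of_mem_divisors hd
    have : (d : ℝ) * ((j / d : ℕ) : ℝ) = j := by exact_mod_cast Nat.mul_div_cancel' hdj
    rw [this, mul_comm]
  have hq : ∀ d ∈ Ioc 0 N, 0 ≤ ∑ m ∈ Ioc 0 (N / d), (x - (d : ℝ) * m) - (x ^ 2 / (2 * d) - x / 2) ∧
    ∑ m ∈ Ioc 0 (N / d), (x - (d : ℝ) * m) - (x ^ 2 / (2 * d) - x / 2) ≤ d := by
    intro d hd
    have hd1 := (Finset.mem_Ioc.1 hd).1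
    have hd0 : (0 : ℝ) < d := by exact_mod_cast hd1
    apply quad_sum x d (N / d) hd1
    · rw [le_div_iff₀ hd0]
      have : (((N / d : ℕ) : ℝ)) * d ≤ N := by exact_mod_cast Nat.div_mul_le_self N d
      linarith
    · rw [div_le_iff₀ hd0]
      have h3 : N + 1 ≤ (N / d + 1) * d := by
        have := Nat.lt_mul_div_succ N hd1
        rw [mul_comm] at this; omega
      have : (N : ℝ) + 1 ≤ (((N / d : ℕ) : ℝ) + 1) * d := by exact_mod_cast h3
      linarith
  obtain ⟨E, hE⟩ : ∃ E, E = ∑ d ∈ Ioc 0 N, mulsf (ws s) d *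
      (∑ m ∈ Ioc 0 (N / d), (x - (d : ℝ) * m) - (x ^ 2 / (2 * d) - x / 2)) := ⟨_, rfl⟩
  have hE0 : 0 ≤ E := by
    rw [hE]; exact Finset.sum_nonneg fun d hd => mul_nonneg (hg d) (hq d hd).1
  have hE1 : E ≤ DD * N := by
    rw [hE]
    refine le_trans (Finset.sum_le_sum fun d hd => ?_) (sum_aa_le N)
    rw [aa_apply, mul_comm]
    exact mul_le_mul (hq d hd).2 (mulsf_mono (ws_nonneg s) (ws_le s) d) (hg d) (Nat.cast_nonneg d)
  have e2 : ∑ j ∈ Ioc 0 N, (x - j) * ∑ d ∈ j.divisors, mulsf (ws s) d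
      = x ^ 2 / 2 * ∑ n ∈ Ioc 0 N, mulsf (ws s) n / n - x / 2 * GS s N + E := by
    rw [e1, hE]
    unfold GS
    rw [Finset.mul_sum, Finset.mul_sum, ← Finset.sum_sub_distrib, ← Finset.sum_add_distrib]
    refine Finset.sum_congr rfl fun d hd => ?_
    have hd0 : (0 : ℝ) < d := by exact_mod_cast (Finset.mem_Ioc.1 hd).1
    field_simp
    ring
  obtain ⟨t1, t2⟩ := KK_tail s N
  have hx : 0 ≤ x := by linarith
  have t3 : x ^ 2 / 2 * (KK s - ∑ n ∈ Ioc 0 N, mulsf (ws s) n / n) ≤ DD * x + DD := by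
    have : x ^ 2 / 2 * (KK s - ∑ n ∈ Ioc 0 N, mulsf (ws s) n / n) ≤ x ^ 2 / 2 * (2 * DD / (N + 1)) := by
      gcongr
    refine this.trans ?_
    rw [mul_div_assoc', div_le_iff₀ (by linarith)]
    have h5 : x * x ≤ (x + 1) * (N + 1) := mul_le_mul (by linarith) h2 hx (by linarith)
    nlinarith
  have t4 : 0 ≤ x ^ 2 / 2 * (KK s - ∑ n ∈ Ioc 0 N, mulsf (ws s) n / n) := by positivity
  have t5 : DD * N ≤ DD * x := by gcongr
  rw [e2, abs_le]
  constructor <;> nlinarith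

lemma even_case : ∃ A : ℝ, 0 ≤ A ∧ ∀ q h : ℕ, 1 ≤ q → 2 ∣ q → q ≤ h →
    |(∑ j ∈ Finset.Icc 1 (h / q), ((h : ℝ) - (j : ℝ) * q) * singSeries (j * q))
        - (h : ℝ) ^ 2 / (2 * (q.totient : ℝ))
        + ((h : ℝ) / 2) * Real.log ((h : ℝ) / q)|
      ≤ A * h * (PP q.primeFactors * (1 + VV q.primeFactors)) := by
  obtain ⟨B, hB, hGS⟩ := GS_bound
  have hD := DD_nonneg
  obtain ⟨T, hT⟩ : ∃ T, T = 2 * twinC := ⟨_, rfl⟩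
  have hTa := abs_nonneg T
  refine ⟨3 * DD * |T| + |T| * B + 9 * |T| * DD + 1, by positivity, fun q h hq h2 hqh => ?_⟩
  obtain ⟨s, hs⟩ : ∃ s, s = q.primeFactors := ⟨_, rfl⟩
  have hsp : ∀ p ∈ s, p.Prime := fun p hp => by
    rw [hs] at hp; exact Nat.prime_of_mem_primeFactors hp
  have hP := PP_ge_one hsp
  have hV := VV_nonneg hsp
  have hq0 : (0 : ℝ) < q := by exact_mod_cast hq
  have hh0 : (0 : ℝ) < h := by exact_mod_cast (by omega : 0 < h)
  obtain ⟨N, hN⟩ : ∃ N, N = h / q := ⟨_, rfl⟩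
  have hN1 : 1 ≤ N := by rw [hN]; exact Nat.div_pos hqh hq
  have hN1' : (1 : ℝ) ≤ N := by exact_mod_cast hN1
  obtain ⟨x, hx⟩ : ∃ x, x = (h : ℝ) / q := ⟨_, rfl⟩
  have hhx : (h : ℝ) = q * x := by rw [hx]; field_simp
  have hx1 : (N : ℝ) ≤ x := by
    rw [hx, hN]; exact Nat.cast_div_le
  have hx2 : x ≤ N + 1 := by
    rw [hx, div_le_iff₀ hq0, hN]
    have := (Nat.lt_mul_div_succ h hq).le
    rw [mul_comm] at this
    exact_mod_cast this
  have hW := weighted s x N hx1 hx2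
  obtain ⟨W, hWd⟩ : ∃ W, W = ∑ j ∈ Ioc 0 N, (x - j) * ∑ d ∈ j.divisors, mulsf (ws s) d := ⟨_, rfl⟩
  rw [← hWd] at hW
  have e1 : ∑ j ∈ Finset.Icc 1 (h / q), ((h : ℝ) - (j : ℝ) * q) * singSeries (j * q)
      = q * (T * PP s) * W := by
    rw [hWd, Finset.mul_sum, ← hN]
    refine Finset.sum_congr rfl fun j hj => ?_
    rw [sing_eq hq h2 (Finset.mem_Icc.1 hj).1, hhx, hT, hs]
    ring
  have hK := twinC_KK hq h2
  rw [← hs, ← hT] at hK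
  have e2 : (h : ℝ) ^ 2 / (2 * (q.totient : ℝ)) = q * (T * PP s) * (x ^ 2 / 2 * KK s) := by
    have : (h : ℝ) ^ 2 / (2 * (q.totient : ℝ)) = q * x ^ 2 / 2 * (q / (q.totient : ℝ)) := by
      rw [hhx]; ring
    rw [this, ← hK]; ring
  obtain ⟨g1, g2⟩ := hGS s hsp N
  have hGG := GG_asymp hN1
  have hTl : T * lam = 1 := by rw [hT]; exact twinC_lam
  have l1 : Real.log N ≤ Real.log x := Real.log_le_log (by linarith) hx1
  have l2 : Real.log x ≤ Real.log N + 1 := by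
    have h3 : Real.log x ≤ Real.log (2 * N) := Real.log_le_log (by linarith) (by linarith)
    rw [Real.log_mul (by norm_num) (by linarith)] at h3
    have := Real.log_two_lt_d9
    linarith
  have e3 : q * (T * PP s) * W - q * (T * PP s) * (x ^ 2 / 2 * KK s) + (h : ℝ) / 2 * Real.log x
      = q * (T * PP s) * (W - (x ^ 2 / 2 * KK s - x / 2 * GS s N))
        - h / 2 * (T * (PP s * GS s N - GG N) + T * (GG N - lam * Real.log N)
            + (Real.log N - Real.log x)) := by
    have : T * (GG N - lam * Real.log N) = T * GG N - Real.log N := by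
      rw [mul_sub, ← mul_assoc, hTl, one_mul]
    rw [this, hhx]; ring
  rw [e1, e2, ← hx, ← hs, e3]
  have b1 : |q * (T * PP s) * (W - (x ^ 2 / 2 * KK s - x / 2 * GS s N))|
      ≤ h * (3 * DD * |T| * PP s) := by
    rw [abs_mul, abs_mul, abs_mul, abs_of_pos hq0, abs_of_nonneg (by linarith : 0 ≤ PP s)]
    have : 2 * DD * x + DD ≤ 3 * DD * x := by nlinarith
    calc (q : ℝ) * (|T| * PP s) * |W - (x ^ 2 / 2 * KK s - x / 2 * GS s N)|
        ≤ q * (|T| * PP s) * (3 * DD * x) := by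
          apply mul_le_mul_of_nonneg_left (hW.trans this); positivity
      _ = h * (3 * DD * |T| * PP s) := by rw [hhx]; ring
  have b2 : |T * (PP s * GS s N - GG N) + T * (GG N - lam * Real.log N)
            + (Real.log N - Real.log x)| ≤ |T| * (B * (PP s * VV s)) + |T| * (9 * DD) + 1 := by
    refine (abs_add_le _ _).trans (add_le_add ((abs_add_le _ _).trans (add_le_add ?_ ?_)) ?_)
    · rw [abs_mul, abs_of_nonneg g1]; gcongr
    · rw [abs_mul]; gcongr
    · rw [abs_le]; constructor <;> linarith
  have b3 : |(h : ℝ) / 2 * (T * (PP s * GS s N - GG N) + T * (GG N - lam * Real.log N)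
            + (Real.log N - Real.log x))| ≤ h * (|T| * (B * (PP s * VV s)) + |T| * (9 * DD) + 1) := by
    rw [abs_mul, abs_of_pos (by positivity : (0 : ℝ) < h / 2)]
    exact mul_le_mul (by linarith) b2 (abs_nonneg _) hh0.le
  refine (abs_sub _ _).trans ((add_le_add b1 b3).trans ?_)
  rw [← mul_add, mul_comm _ (h : ℝ), mul_assoc (h : ℝ)]
  apply mul_le_mul_of_nonneg_left _ hh0.le
  have hPV : 0 ≤ PP s * VV s := mul_nonneg (by linarith) hV
  have c1 : 0 ≤ 3 * DD * |T| * (PP s * VV s) := by positivity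
  have c2 : 0 ≤ |T| * B * PP s := mul_nonneg (by positivity) (by linarith)
  have c3 : 0 ≤ |T| * DD * (PP s - 1) := mul_nonneg (by positivity) (by linarith)
  have c4 : 0 ≤ |T| * DD * (PP s * VV s) := by positivity
  nlinarith

lemma q_div_totient_le {q : ℕ} (hq : 1 ≤ q) : (q : ℝ) / q.totient ≤ 2 * PP q.primeFactors := by
  have hq0 : (q : ℝ) ≠ 0 := by exact_mod_cast (by omega : q ≠ 0)
  have h10 : (q.totient : ℝ) = q * ∏ p ∈ q.primeFactors, (1 - (p : ℝ)⁻¹) := by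
    have := Nat.totient_eq_mul_prod_factors q
    have h11 := congrArg (fun x : ℚ => (x : ℝ)) this
    simpa using h11
  have hsp : ∀ p ∈ q.primeFactors, p.Prime := fun p hp => Nat.prime_of_mem_primeFactors hp
  rw [h10, div_mul_eq_div_div, div_self hq0, one_div, ← Finset.prod_inv_distrib]
  have key : ∀ s : Finset ℕ, (∀ p ∈ s, p.Prime) →
      ∏ p ∈ s, (1 - (p : ℝ)⁻¹)⁻¹ ≤ (if 2 ∈ s then 2 else 1) * PP s := by
    intro s
    induction s using Finset.induction with
    | empty => simp [PP]
    | insert p s hps ih =>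
      intro hs
      have ih := ih fun r hr => hs r (mem_insert_of_mem hr)
      have hP := PP_ge_one fun r hr => hs r (mem_insert_of_mem hr)
      have hPi : PP (insert p s) = (1 + w0 p) * PP s := by
        unfold PP; rw [Finset.prod_insert hps]
      rw [hPi, Finset.prod_insert hps]
      have hp := hs p (mem_insert_self _ _)
      rcases prime_cases hp with h | ⟨h, h3⟩
      · subst h
        rw [if_neg hps] at ih
        rw [if_pos (mem_insert_self _ _), w0_two]
        rw [show (1 - ((2 : ℕ) : ℝ)⁻¹)⁻¹ = 2 by norm_num]
        linarith
      · have hne : (2 ∈ insert p s) ↔ 2 ∈ s := by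
          simp [mem_insert]; intro h'; omega
        simp only [hne]
        have h9 : (1 - (p : ℝ)⁻¹)⁻¹ ≤ 1 + w0 p := by
          have h4 : (0 : ℝ) < p - 2 := by linarith
          have h5 : (0 : ℝ) < p - 1 := by linarith
          have h6 : (0 : ℝ) < p := by linarith
          have h8 : 1 - (p : ℝ)⁻¹ = (p - 1) / p := by field_simp
          unfold w0
          rw [h8, inv_div, div_le_iff₀ h5]
          have : (1 + 1 / ((p : ℝ) - 2)) * (p - 1) = p - 1 + (p - 1) / (p - 2) := by
            field_simp
          rw [this]
          have : 1 ≤ ((p : ℝ) - 1) / (p - 2) := by rw [le_div_iff₀ h4]; linarith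
          linarith
        have hw := w0_nonneg hp.two_le
        have : 0 ≤ ∏ p ∈ s, (1 - (p : ℝ)⁻¹)⁻¹ := Finset.prod_nonneg fun r hr => by
          have h1r : (1 : ℝ) ≤ r := by exact_mod_cast (hs r (mem_insert_of_mem hr)).one_lt.le
          exact inv_nonneg.2 (sub_nonneg.2 (inv_le_one_of_one_le₀ h1r))
        calc _ ≤ (1 + w0 p) * ((if 2 ∈ s then 2 else 1) * PP s) :=
              mul_le_mul h9 ih this (by linarith)
          _ = _ := by ring
  refine (key _ hsp).trans ?_
  have hP := PP_ge_one hsp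
  split_ifs <;> linarith

lemma odd_case : ∃ A : ℝ, 0 ≤ A ∧ ∀ q h : ℕ, 1 ≤ q → ¬ 2 ∣ q → q ≤ h →
    |(∑ j ∈ Finset.Icc 1 (h / q), ((h : ℝ) - (j : ℝ) * q) * singSeries (j * q))
        - (h : ℝ) ^ 2 / (2 * (q.totient : ℝ))
        + ((h : ℝ) / 2) * Real.log ((h : ℝ) / q)|
      ≤ A * h * (PP q.primeFactors * (1 + VV q.primeFactors)) := by
  obtain ⟨A, hA, hev⟩ := even_case
  refine ⟨A + 4, by linarith, fun q h hq h2 hqh => ?_⟩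
  have hsp : ∀ p ∈ q.primeFactors, p.Prime := fun p hp => Nat.prime_of_mem_primeFactors hp
  have hP := PP_ge_one hsp
  have hV := VV_nonneg hsp
  have hq0 : (0 : ℝ) < q := by exact_mod_cast hq
  have hh0 : (0 : ℝ) < h := by exact_mod_cast (by omega : 0 < h)
  have hPV : 1 ≤ PP q.primeFactors * (1 + VV q.primeFactors) := by nlinarith
  have hlog2 := Real.log_two_lt_d9
  have hlog2' : 0 < Real.log 2 := Real.log_pos (by norm_num)
  have hodd : ∀ j, ¬ 2 ∣ j → singSeries (j * q) = 0 := by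
    intro j hj
    unfold singSeries
    rw [if_neg]
    rintro ⟨h3, _⟩
    rcases Nat.prime_two.dvd_mul.1 h3 with h | h
    · exact hj h
    · exact h2 h
  rcases Nat.lt_or_ge h (2 * q) with hlt | hge
  · have hN : h / q = 1 := by
      rw [Nat.div_eq_iff (by omega)]; omega
    have hh2 : (h : ℝ) ≤ 2 * q := by exact_mod_cast hlt.le
    have hhq : (q : ℝ) ≤ h := by exact_mod_cast hqh
    rw [hN, Finset.Icc_self, Finset.sum_singleton, hodd 1 (by norm_num), mul_zero, zero_sub]
    have l0 : 0 ≤ Real.log ((h : ℝ) / q) := Real.log_nonneg (by rw [le_div_iff₀ hq0]; linarith)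
    have l1 : Real.log ((h : ℝ) / q) ≤ Real.log 2 := by
      apply Real.log_le_log (by positivity)
      rw [div_le_iff₀ hq0]; linarith
    have ht : (0 : ℝ) < q.totient := by exact_mod_cast Nat.totient_pos.2 hq
    have t0 : 0 ≤ (h : ℝ) ^ 2 / (2 * (q.totient : ℝ)) := by positivity
    have t1 : (h : ℝ) ^ 2 / (2 * (q.totient : ℝ)) ≤ h * (2 * PP q.primeFactors) := by
      calc (h : ℝ) ^ 2 / (2 * (q.totient : ℝ)) = h * (h / (2 * (q.totient : ℝ))) := by ring
        _ ≤ h * (2 * q / (2 * (q.totient : ℝ))) := by gcongr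
        _ = h * (q / q.totient) := by field_simp
        _ ≤ _ := by gcongr; exact q_div_totient_le hq
    have m1 : (h : ℝ) * PP q.primeFactors ≤ h * (PP q.primeFactors * (1 + VV q.primeFactors)) := by
      gcongr; nlinarith
    have m2 : (h : ℝ) * 1 ≤ h * (PP q.primeFactors * (1 + VV q.primeFactors)) := by
      gcongr
    have m3 : 0 ≤ A * (h * (PP q.primeFactors * (1 + VV q.primeFactors))) := by positivity
    have m4 : 0 ≤ (h : ℝ) / 2 * Real.log ((h : ℝ) / q) := by positivity
    have m5 : (h : ℝ) / 2 * Real.log ((h : ℝ) / q) ≤ h / 2 * 1 := by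
      gcongr; linarith
    rw [abs_le]
    constructor <;> nlinarith
  · have h3 := hev (2 * q) h (by omega) (by omega) hge
    have hcop : Nat.Coprime 2 q := (Nat.Prime.coprime_iff_not_dvd Nat.prime_two).2 h2
    have htot : (2 * q).totient = q.totient := by
      rw [Nat.totient_mul hcop]; simp
    have h2s : 2 ∉ q.primeFactors := fun h => h2 (Nat.dvd_of_mem_primeFactors h)
    have hpf : (2 * q).primeFactors = insert 2 q.primeFactors := by
      rw [Nat.primeFactors_mul (by norm_num) (by omega), Nat.prime_two.primeFactors]; rfl
    have hPP : PP (2 * q).primeFactors = PP q.primeFactors := by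
      unfold PP; rw [hpf, Finset.prod_insert h2s, w0_two]; simp
    have hVV : VV (2 * q).primeFactors = VV q.primeFactors := by
      unfold VV; rw [hpf, Finset.sum_insert h2s, w0_two]; simp
    have hsum : ∑ j ∈ Finset.Icc 1 (h / q), ((h : ℝ) - (j : ℝ) * q) * singSeries (j * q)
        = ∑ j ∈ Finset.Icc 1 (h / (2 * q)), ((h : ℝ) - (j : ℝ) * ((2 * q : ℕ) : ℝ))
            * singSeries (j * (2 * q)) := by
      symm
      refine Finset.sum_of_injOn (fun j => 2 * j) (fun a _ b _ hab => by simpa using hab) ?_ ?_ ?_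
      · intro j hj
        simp only [Finset.coe_Icc, Set.mem_Icc] at hj ⊢
        refine ⟨by omega, ?_⟩
        have := (Nat.le_div_iff_mul_le (by omega)).1 hj.2
        rw [Nat.le_div_iff_mul_le (by omega)]
        nlinarith
      · intro j hj hj2
        rw [hodd j, mul_zero]
        rintro ⟨i, rfl⟩
        apply hj2
        refine ⟨i, ?_, rfl⟩
        simp only [Finset.coe_Icc, Set.mem_Icc, Finset.mem_Icc] at hj ⊢
        refine ⟨by omega, ?_⟩
        have := (Nat.le_div_iff_mul_le (by omega)).1 hj.2
        rw [Nat.le_div_iff_mul_le (by omega)]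
        nlinarith
      · intro j hj
        have : j * (2 * q) = 2 * j * q := by ring
        rw [this]; push_cast; ring
    have hlog : Real.log ((h : ℝ) / q) = Real.log ((h : ℝ) / ((2 * q : ℕ) : ℝ)) + Real.log 2 := by
      rw [← Real.log_mul (by positivity) (by norm_num)]
      congr 1; push_cast; field_simp
    rw [hPP, hVV, htot, ← hsum] at h3
    rw [hlog]
    have m2 : (h : ℝ) * 1 ≤ h * (PP q.primeFactors * (1 + VV q.primeFactors)) := by
      gcongr
    have m5 : (h : ℝ) / 2 * Real.log 2 ≤ h / 2 * 1 := by
      gcongr; linarith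
    have m6 : 0 ≤ (h : ℝ) / 2 * Real.log 2 := by positivity
    rw [abs_le] at h3 ⊢
    constructor <;> nlinarith [h3.1, h3.2]

theorem lemma7_friedlander_goldston :
    ∃ A : ℝ, 0 < A ∧ ∀ q h : ℕ, 1 ≤ q → q ≤ h →
      |(∑ j ∈ Finset.Icc 1 (h / q), ((h : ℝ) - (j : ℝ) * q) * singSeries (j * q))
        - (h : ℝ) ^ 2 / (2 * (q.totient : ℝ))
        + ((h : ℝ) / 2) * Real.log ((h : ℝ) / q)|
      ≤ A * h * (Real.log (Real.log (3 * q))) ^ 3 := by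
  obtain ⟨A1, hA1, ho⟩ := odd_case
  obtain ⟨A2, hA2, he⟩ := even_case
  obtain ⟨K1, hK1, hPP⟩ := PP_le
  obtain ⟨K2, hK2, hVV⟩ := VV_le
  have hl3 := (loglog_pos (q := 1) le_rfl).2.2
  refine ⟨(A1 + A2 + 1) * (K1 * (1 / Real.log (Real.log 3) + K2)), by positivity,
    fun q h hq hqh => ?_⟩
  obtain ⟨-, hL, -⟩ := loglog_pos hq
  have hsp : ∀ p ∈ q.primeFactors, p.Prime := fun p hp => Nat.prime_of_mem_primeFactors hp
  have hP := PP_ge_one hsp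
  have hV := VV_nonneg hsp
  have hp := hPP q hq
  have hv := hVV q hq
  obtain ⟨L, hLd⟩ : ∃ L, L = Real.log (Real.log (3 * q)) := ⟨_, rfl⟩
  rw [← hLd] at hL hp hv ⊢
  have hL0 : 0 < L := lt_of_lt_of_le hl3 hL
  have h1 : 1 ≤ 1 / Real.log (Real.log 3) * L := by
    rw [one_div, inv_mul_eq_div, le_div_iff₀ hl3]; linarith
  have h2 : PP q.primeFactors * (1 + VV q.primeFactors)
      ≤ K1 * (1 / Real.log (Real.log 3) + K2) * L ^ 3 := by
    calc PP q.primeFactors * (1 + VV q.primeFactors)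
        ≤ (K1 * L ^ 2) * (1 / Real.log (Real.log 3) * L + K2 * L) :=
          mul_le_mul hp (by linarith) (by linarith) (by positivity)
      _ = _ := by ring
  have h3 : |(∑ j ∈ Finset.Icc 1 (h / q), ((h : ℝ) - (j : ℝ) * q) * singSeries (j * q))
        - (h : ℝ) ^ 2 / (2 * (q.totient : ℝ))
        + ((h : ℝ) / 2) * Real.log ((h : ℝ) / q)|
      ≤ (A1 + A2 + 1) * h * (PP q.primeFactors * (1 + VV q.primeFactors)) := by
    by_cases hq2 : 2 ∣ q
    · refine (he q h hq hq2 hqh).trans ?_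
      gcongr
      linarith
    · refine (ho q h hq hq2 hqh).trans ?_
      gcongr
      linarith
  calc _ ≤ _ := h3
    _ ≤ (A1 + A2 + 1) * h * (K1 * (1 / Real.log (Real.log 3) + K2) * L ^ 3) := by gcongr
    _ = _ := by ring
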